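/- arXiv:2506.15481 — 4 statements merged into one kernel-verified Lean document; each statement's English description precedes it below -/
import Mathlib

section
/- There exists a constant C ≥ 0 (depending only on v, μ, σ, d and the point (t,x)) such that for every Δt ∈ (0,1], the mean of the antithetic single-step residual error satisfies |E[ε(Δt)]| ≤ C·Δt. -/
open MeasureTheory ProbabilityTheory Matrix

/-- Law of a random vector in `ℝ^d` whose coordinates are i.i.d. centered Gaussian
with variance `s` (i.e. `N(0, s·I_d)`). -/
noncomputable def gaussPi (d : ℕ) (s : ℝ) : Measure (Fin d → ℝ) :=
  Measure.pi fun _ => gaussianReal 0 s.toNNReal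

/-- Time partial derivative `∂_t v (t, x)`. -/
noncomputable def partialT {d : ℕ} (v : ℝ → (Fin d → ℝ) → ℝ) (t : ℝ) (x : Fin d → ℝ) : ℝ :=
  deriv (fun s => v s x) t

/-- Spatial gradient `∇_x v (t, x)`. -/
noncomputable def spatialGrad {d : ℕ} (v : ℝ → (Fin d → ℝ) → ℝ) (t : ℝ) (x : Fin d → ℝ) :
    Fin d → ℝ :=
  fun i => fderiv ℝ (v t) x (Pi.single i 1)

/-- Spatial Hessian `∇²_x v (t, x)` as a matrix. -/
noncomputable def spatialHess {d : ℕ} (v : ℝ → (Fin d → ℝ) → ℝ) (t : ℝ) (x : Fin d → ℝ) :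
    Matrix (Fin d) (Fin d) ℝ :=
  Matrix.of fun i j =>
    fderiv ℝ (fun y => fderiv ℝ (v t) y (Pi.single j 1)) x (Pi.single i 1)

/-- The antithetic single-step residual error `ε(Δt)` as a function of the Gaussian
increment `η`:
`ε = (v(t+Δt,x⁺) + v(t+Δt,x⁻) − 2v(t,x))/(2Δt) − (∂_t v + ½Tr[σσᵀ∇²v] + μ·∇v)` with
`x⁺ = x + μΔt + ση`, `x⁻ = x + μΔt − ση`. -/
noncomputable def resErr {d : ℕ} (v : ℝ → (Fin d → ℝ) → ℝ) (μv : Fin d → ℝ)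
    (σ : Matrix (Fin d) (Fin d) ℝ) (t : ℝ) (x : Fin d → ℝ) (Δt : ℝ) (η : Fin d → ℝ) : ℝ :=
  (v (t + Δt) (x + Δt • μv + σ.mulVec η) + v (t + Δt) (x + Δt • μv - σ.mulVec η) - 2 * v t x)
      / (2 * Δt)
    - (partialT v t x + (1 / 2) * (σ * σᵀ * spatialHess v t x).trace + μv ⬝ᵥ spatialGrad v t x)

/-!
Write `f (t, x) = v t x`, `a = Δt • (1, μ)` and `w = (0, σ η)`. In `f (p + a + w) + f (p + a - w)`
the odd Taylor terms in `w` cancel, so that `2 f p + 2 Df p a + D²f p (w, w)` approximates this sum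
up to `O(‖a‖² + ‖a‖ ‖w‖² + ‖w‖⁴)`. Divided by `2 Δt`, this says that the residual error equals
`(⟨σ η, H σ η⟩ / Δt - Tr[σ σᵀ H]) / 2` with `H` the spatial Hessian, which has mean zero since
`E[η ηᵀ] = Δt I`, up to a term whose mean is `O(Δt)`, since `E ‖σ η‖ ^ k` is proportional to
`Δt ^ (k / 2)`.
-/

section Taylor

variable {E F : Type*} [NormedAddCommGroup E] [NormedSpace ℝ E] [NormedAddCommGroup F]
  [NormedSpace ℝ F] {f : E → F}

lemma norm_map_add_sub_taylor_le [CompleteSpace F] {n : ℕ} (hf : ContDiff ℝ (n + 1) f) {M : ℝ}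
    (hM : ∀ z, ‖iteratedFDeriv ℝ (n + 1) f z‖ ≤ M) (x y : E) :
    ‖f (x + y) - ∑ k ∈ Finset.range (n + 1),
        (k.factorial : ℝ)⁻¹ • iteratedFDeriv ℝ k f x fun _ => y‖
      ≤ M * ‖y‖ ^ (n + 1) / (n + 1).factorial := by
  have hintegrand : ∀ r ∈ Set.Icc (0 : ℝ) 1,
      ‖(1 - r) ^ n • iteratedFDeriv ℝ (n + 1) f (x + r • y) fun _ => y‖
        ≤ (1 - r) ^ n * (M * ‖y‖ ^ (n + 1)) := by
    intro r hr
    have hr' : 0 ≤ 1 - r := sub_nonneg.2 hr.2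
    rw [norm_smul, norm_pow, Real.norm_of_nonneg hr']
    gcongr
    refine ((iteratedFDeriv ℝ (n + 1) f (x + r • y)).le_opNorm _).trans ?_
    simpa using mul_le_mul_of_nonneg_right (hM (x + r • y)) (by positivity)
  have hweight : ∫ r in (0 : ℝ)..1, (1 - r) ^ n = ((n : ℝ) + 1)⁻¹ := by
    simp [intervalIntegral.integral_comp_sub_left (fun r : ℝ => r ^ n)]
  rw [map_add_eq_sum_add_integral_iteratedFDeriv fun _ _ => hf.contDiffAt, add_sub_cancel_left,
    norm_smul, norm_inv, RCLike.norm_natCast]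
  calc (n.factorial : ℝ)⁻¹ * ‖∫ r in (0 : ℝ)..1,
          (1 - r) ^ n • iteratedFDeriv ℝ (n + 1) f (x + r • y) fun _ => y‖
      ≤ (n.factorial : ℝ)⁻¹ * ∫ r in (0 : ℝ)..1, (1 - r) ^ n * (M * ‖y‖ ^ (n + 1)) := by
        gcongr
        exact intervalIntegral.norm_integral_le_of_norm_le zero_le_one
          (.of_forall fun r hr => hintegrand r (Set.Ioc_subset_Icc_self hr))
          (Continuous.intervalIntegrable (by fun_prop) _ _)
    _ = M * ‖y‖ ^ (n + 1) / (n + 1).factorial := by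
        rw [intervalIntegral.integral_mul_const, hweight, Nat.factorial_succ]
        push_cast
        field_simp

lemma norm_map_add_add_map_sub_sub_le [CompleteSpace F] (hf : ContDiff ℝ 4 f) {M : ℝ}
    (hM : ∀ z, ‖iteratedFDeriv ℝ 4 f z‖ ≤ M) (x y : E) :
    ‖f (x + y) + f (x - y) - 2 • f x - iteratedFDeriv ℝ 2 f x fun _ => y‖
      ≤ M * ‖y‖ ^ 4 / 12 := by
  have hplus := norm_map_add_sub_taylor_le (n := 3) (mod_cast hf) hM x y
  have hminus := norm_map_add_sub_taylor_le (n := 3) (mod_cast hf) hM x (-y)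
  have hneg (k : ℕ) : (iteratedFDeriv ℝ k f x fun _ => -y)
      = (-1 : ℝ) ^ k • iteratedFDeriv ℝ k f x fun _ => y := by
    simpa using (iteratedFDeriv ℝ k f x).map_smul_univ (fun _ => (-1 : ℝ)) fun _ => y
  refine (Eq.trans_le ?_ (norm_add_le_of_le hplus hminus)).trans_eq ?_
  · congr 1
    simp only [hneg, Finset.sum_range_succ, Finset.sum_range_zero, Nat.factorial,
      iteratedFDeriv_zero_apply, ← sub_eq_add_neg]
    module
  · simp only [norm_neg, Nat.factorial]
    push_cast
    ring

lemma norm_iteratedFDeriv_sub_le {n : ℕ} (hf : ContDiff ℝ (n + 1) f) {M : ℝ}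
    (hM : ∀ z, ‖iteratedFDeriv ℝ (n + 1) f z‖ ≤ M) (x y : E) :
    ‖iteratedFDeriv ℝ n f y - iteratedFDeriv ℝ n f x‖ ≤ M * ‖y - x‖ :=
  convex_univ.norm_image_sub_le_of_norm_fderiv_le (𝕜 := ℝ)
    (fun z _ => hf.differentiable_iteratedFDeriv (mod_cast n.lt_succ_self) z)
    (fun z _ => norm_fderiv_iteratedFDeriv.trans_le (hM z)) (Set.mem_univ x) (Set.mem_univ y)

lemma norm_antithetic_sub_generator_le [CompleteSpace F] (hf : ContDiff ℝ 4 f) {M₂ M₃ M₄ : ℝ}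
    (hM₂ : ∀ z, ‖iteratedFDeriv ℝ 2 f z‖ ≤ M₂) (hM₃ : ∀ z, ‖iteratedFDeriv ℝ 3 f z‖ ≤ M₃)
    (hM₄ : ∀ z, ‖iteratedFDeriv ℝ 4 f z‖ ≤ M₄) (x a w : E) :
    ‖f (x + a + w) + f (x + a - w) - 2 • f x
        - (2 • fderiv ℝ f x a + iteratedFDeriv ℝ 2 f x fun _ => w)‖
      ≤ M₂ * ‖a‖ ^ 2 + M₃ * ‖a‖ * ‖w‖ ^ 2 + M₄ * ‖w‖ ^ 4 / 12 := by
  have hsymm := norm_map_add_add_map_sub_sub_le hf hM₄ (x + a) w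
  have hhess : ‖(iteratedFDeriv ℝ 2 f (x + a) fun _ => w) - iteratedFDeriv ℝ 2 f x fun _ => w‖
      ≤ M₃ * ‖a‖ * ‖w‖ ^ 2 := by
    have h := norm_iteratedFDeriv_sub_le (n := 2) (hf.of_le (by norm_num)) hM₃ x (x + a)
    rw [add_sub_cancel_left] at h
    refine ((iteratedFDeriv ℝ 2 f (x + a) - iteratedFDeriv ℝ 2 f x).le_opNorm fun _ => w).trans ?_
    simpa using mul_le_mul_of_nonneg_right h (sq_nonneg ‖w‖)
  have hdrift : ‖f (x + a) - f x - fderiv ℝ f x a‖ ≤ M₂ * ‖a‖ ^ 2 / 2 := by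
    simpa [Finset.sum_range_succ, sub_add_eq_sub_sub] using
      norm_map_add_sub_taylor_le (n := 1) (hf.of_le (by norm_num)) hM₂ x a
  have hdrift₂ := norm_nsmul_le (n := 2) (a := f (x + a) - f x - fderiv ℝ f x a)
  calc _ = ‖2 • (f (x + a) - f x - fderiv ℝ f x a)
          + ((iteratedFDeriv ℝ 2 f (x + a) fun _ => w) - iteratedFDeriv ℝ 2 f x fun _ => w)
          + (f (x + a + w) + f (x + a - w) - 2 • f (x + a)
            - iteratedFDeriv ℝ 2 f (x + a) fun _ => w)‖ := by congr 1; module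
    _ ≤ 2 * (M₂ * ‖a‖ ^ 2 / 2) + M₃ * ‖a‖ * ‖w‖ ^ 2 + M₄ * ‖w‖ ^ 4 / 12 :=
        norm_add₃_le.trans
          (add_le_add_three (hdrift₂.trans (by push_cast; gcongr)) hhess hsymm)
    _ = _ := by ring

end Taylor

section Derivatives

variable {d : ℕ} {v : ℝ → (Fin d → ℝ) → ℝ}

lemma fderiv_eq_fderiv_uncurry {t : ℝ} {x : Fin d → ℝ}
    (hv : DifferentiableAt ℝ (Function.uncurry v) (t, x)) (w : Fin d → ℝ) :
    fderiv ℝ (v t) x w = fderiv ℝ (Function.uncurry v) (t, x) (0, w) := by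
  have h : HasFDerivAt (v t) _ x := hv.hasFDerivAt.comp x (hasFDerivAt_prodMk_right t x)
  simp [h.fderiv]

lemma partialT_add_dotProduct_spatialGrad {t : ℝ} {x : Fin d → ℝ}
    (hv : DifferentiableAt ℝ (Function.uncurry v) (t, x)) (μv : Fin d → ℝ) :
    partialT v t x + μv ⬝ᵥ spatialGrad v t x = fderiv ℝ (Function.uncurry v) (t, x) (1, μv) := by
  have ht : partialT v t x = fderiv ℝ (Function.uncurry v) (t, x) (1, 0) := by
    have hline : HasDerivAt (fun s : ℝ => (s, x)) (1, 0) t :=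
      (hasDerivAt_id t).prodMk (hasDerivAt_const t x)
    exact (hv.hasFDerivAt.comp_hasDerivAt t hline).deriv
  have hx : μv ⬝ᵥ spatialGrad v t x = fderiv ℝ (v t) x μv := by
    conv_rhs => rw [pi_eq_sum_univ' μv]
    simp [dotProduct, spatialGrad]
  rw [ht, hx, fderiv_eq_fderiv_uncurry hv, ← map_add]
  simp

lemma iteratedFDeriv_eq_iteratedFDeriv_uncurry {n : ℕ} (hv : ContDiff ℝ n (Function.uncurry v))
    (t : ℝ) (x w : Fin d → ℝ) :
    (iteratedFDeriv ℝ n (v t) x fun _ => w)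
      = iteratedFDeriv ℝ n (Function.uncurry v) (t, x) fun _ => (0, w) := by
  have hvt : v t = (fun z => Function.uncurry v ((t, 0) + z))
      ∘ ContinuousLinearMap.inr ℝ ℝ (Fin d → ℝ) := by
    ext y
    simp
  rw [hvt, ContinuousLinearMap.iteratedFDeriv_comp_right _ (by fun_prop) x le_rfl,
    iteratedFDeriv_comp_add_left]
  simp

lemma iteratedFDeriv_two_eq_dotProduct_spatialHess {t : ℝ} {x : Fin d → ℝ}
    (hv : ContDiffAt ℝ 2 (v t) x) (w : Fin d → ℝ) :
    (iteratedFDeriv ℝ 2 (v t) x fun _ => w) = w ⬝ᵥ spatialHess v t x *ᵥ w := by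
  have hd : DifferentiableAt ℝ (fderiv ℝ (v t)) x :=
    (hv.fderiv_right (m := 1) (by norm_num)).differentiableAt (by norm_num)
  have hmatrix : spatialHess v t x
      = LinearMap.toMatrix₂' ℝ (fderiv ℝ (fderiv ℝ (v t)) x).toLinearMap₁₂ := by
    ext i j
    simp [spatialHess, fderiv_clm_apply hd (differentiableAt_const _)]
  rw [iteratedFDeriv_two_apply, hmatrix, ← Matrix.toLinearMap₂'_apply',
    Matrix.toLinearMap₂'_toMatrix']
  simp

end Derivatives

section QuadraticForm

variable {Ω m n : Type*} [MeasurableSpace Ω] {P : Measure Ω} [Fintype m] [Fintype n]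
  {X : Ω → m → ℝ} {Y : Ω → n → ℝ}

lemma dotProduct_mulVec_eq_sum (A : Matrix m n ℝ) (x : m → ℝ) (y : n → ℝ) :
    x ⬝ᵥ A *ᵥ y = ∑ i, ∑ j, A i j * (x i * y j) := by
  simp only [dotProduct, mulVec, Finset.mul_sum]
  exact Finset.sum_congr rfl fun i _ => Finset.sum_congr rfl fun j _ => by ring

lemma integrable_dotProduct_mulVec (hX : ∀ i, MemLp (fun ω => X ω i) 2 P)
    (hY : ∀ j, MemLp (fun ω => Y ω j) 2 P) (A : Matrix m n ℝ) :
    Integrable (fun ω => X ω ⬝ᵥ A *ᵥ Y ω) P := by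
  simp only [dotProduct_mulVec_eq_sum]
  exact integrable_finsetSum _ fun i _ => integrable_finsetSum _ fun j _ =>
    ((hX i).integrable_mul (hY j)).const_mul _

lemma integral_dotProduct_mulVec (hX : ∀ i, MemLp (fun ω => X ω i) 2 P)
    (hY : ∀ j, MemLp (fun ω => Y ω j) 2 P) (A : Matrix m n ℝ) :
    ∫ ω, X ω ⬝ᵥ A *ᵥ Y ω ∂P = ∑ i, ∑ j, A i j * ∫ ω, X ω i * Y ω j ∂P := by
  have hint (i : m) (j : n) : Integrable (fun ω => A i j * (X ω i * Y ω j)) P :=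
    ((hX i).integrable_mul (hY j)).const_mul _
  simp only [dotProduct_mulVec_eq_sum]
  rw [integral_finsetSum _ fun i _ => integrable_finsetSum _ fun j _ => hint i j]
  refine Finset.sum_congr rfl fun i _ => ?_
  rw [integral_finsetSum _ fun j _ => hint i j]
  simp only [integral_const_mul]

end QuadraticForm

lemma norm_integral_le_of_norm_sub_le {Ω F : Type*} [MeasurableSpace Ω] {P : Measure Ω}
    [NormedAddCommGroup F] [NormedSpace ℝ F] {f g : Ω → F} {b : Ω → ℝ}
    (hf : AEStronglyMeasurable f P) (hg : Integrable g P) (hb : Integrable b P)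
    (hg₀ : ∫ ω, g ω ∂P = 0) (h : ∀ᵐ ω ∂P, ‖f ω - g ω‖ ≤ b ω) :
    ‖∫ ω, f ω ∂P‖ ≤ ∫ ω, b ω ∂P := by
  have hfg : Integrable (fun ω => f ω - g ω) P := hb.mono' (hf.sub hg.1) h
  have hf_eq : ∫ ω, f ω ∂P = ∫ ω, (f ω - g ω) ∂P := by
    simpa [hg₀] using integral_add hfg hg
  rw [hf_eq]
  exact norm_integral_le_of_norm_le hb h

instance isGaussian_measurePi {ι : Type*} [Fintype ι] {E : ι → Type*}
    [∀ i, NormedAddCommGroup (E i)] [∀ i, NormedSpace ℝ (E i)] [∀ i, MeasurableSpace (E i)]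
    [∀ i, BorelSpace (E i)] [∀ i, CompleteSpace (E i)] [∀ i, SecondCountableTopology (E i)]
    {P : ∀ i, Measure (E i)} [∀ i, IsGaussian (P i)] : IsGaussian (Measure.pi P) := by
  have heval (i : ι) : HasGaussianLaw (fun η : ∀ i, E i => η i) (Measure.pi P) :=
    (measurePreserving_eval P i).hasLaw.hasGaussianLaw
  have hlaw := iIndepFun.hasGaussianLaw heval (iIndepFun_pi fun _ => aemeasurable_id)
  simpa using hlaw.isGaussian_map

section GaussianVector

variable {d : ℕ} {s : ℝ}

instance isGaussian_gaussPi : IsGaussian (gaussPi d s) := isGaussian_measurePi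

lemma hasLaw_eval_gaussPi (i : Fin d) :
    HasLaw (fun η => η i) (gaussianReal 0 s.toNNReal) (gaussPi d s) :=
  (measurePreserving_eval (fun _ : Fin d => gaussianReal 0 s.toNNReal) i).hasLaw

lemma memLp_eval_gaussPi (i : Fin d) : MemLp (fun η => η i) 2 (gaussPi d s) :=
  (hasLaw_eval_gaussPi i).hasGaussianLaw.memLp_two

lemma integral_eval_mul_eval_gaussPi (hs : 0 ≤ s) (i j : Fin d) :
    ∫ η, η i * η j ∂(gaussPi d s) = if i = j then s else 0 := by
  have hmean (k : Fin d) : ∫ η, η k ∂(gaussPi d s) = 0 :=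
    (hasLaw_eval_gaussPi k).integral_eq.trans integral_id_gaussianReal
  have hcov : cov[fun η => η i, fun η => η j; gaussPi d s] = ∫ η, η i * η j ∂(gaussPi d s) := by
    simp [covariance, hmean]
  rw [← hcov]
  split_ifs with hij
  · rw [← hij, covariance_self (measurable_pi_apply i).aemeasurable,
      (hasLaw_eval_gaussPi i).variance_eq, variance_id_gaussianReal, Real.coe_toNNReal s hs]
  · have hind : iIndepFun (fun i η => η i) (gaussPi d s) := iIndepFun_pi fun _ => aemeasurable_id
    exact (hind.indepFun hij).covariance_eq_zero (memLp_eval_gaussPi i) (memLp_eval_gaussPi j)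

lemma integral_dotProduct_mulVec_gaussPi (hs : 0 ≤ s) (A : Matrix (Fin d) (Fin d) ℝ) :
    ∫ η, η ⬝ᵥ A *ᵥ η ∂(gaussPi d s) = s * A.trace := by
  rw [integral_dotProduct_mulVec memLp_eval_gaussPi memLp_eval_gaussPi]
  simp [integral_eval_mul_eval_gaussPi hs, trace, Finset.mul_sum, mul_comm]

lemma gaussPi_eq_map_sqrt_smul (hs : 0 ≤ s) :
    gaussPi d s = (gaussPi d 1).map (fun η => √s • η) := by
  have hscale : (gaussianReal 0 (1 : ℝ).toNNReal).map (√s * ·) = gaussianReal 0 s.toNNReal := by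
    rw [gaussianReal_map_const_mul, mul_zero]
    congr 1
    ext
    simp [hs]
  have : SigmaFinite ((gaussianReal 0 (1 : ℝ).toNNReal).map (√s * ·)) :=
    hscale ▸ inferInstance
  have hpi := Measure.pi_map_pi (μ := fun _ : Fin d => gaussianReal 0 (1 : ℝ).toNNReal)
    (f := fun _ r => √s * r) fun _ => by fun_prop
  simp only [hscale] at hpi
  exact hpi.symm

/-- The absolute moment `E‖σZ‖ᵏ` of a linear image of a standard Gaussian vector `Z ~ N(0, I_d)`,
for the sup norm of `ℝ^m`. -/
noncomputable def gaussMoment {m : Type*} [Fintype m] (σ : Matrix m (Fin d) ℝ) (k : ℕ) : ℝ :=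
  ∫ η, ‖σ *ᵥ η‖ ^ k ∂(gaussPi d 1)

variable {m : Type*} [Fintype m] (σ : Matrix m (Fin d) ℝ) (k : ℕ)

lemma gaussMoment_nonneg : 0 ≤ gaussMoment σ k :=
  integral_nonneg fun _ => by positivity

lemma integrable_norm_mulVec_pow_gaussPi :
    Integrable (fun η => ‖σ *ᵥ η‖ ^ k) (gaussPi d s) :=
  ((IsGaussian.memLp_id (gaussPi d s) k (ENNReal.natCast_ne_top k)).continuousLinearMap_comp
    σ.mulVecLin.toContinuousLinearMap).integrable_norm_pow'

lemma integral_norm_mulVec_pow_gaussPi (hs : 0 ≤ s) :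
    ∫ η, ‖σ *ᵥ η‖ ^ k ∂(gaussPi d s) = √s ^ k * gaussMoment σ k := by
  rw [gaussPi_eq_map_sqrt_smul hs, integral_map (by fun_prop) (by fun_prop), gaussMoment,
    ← integral_const_mul]
  simp [mulVec_smul, norm_smul, mul_pow, abs_of_nonneg (Real.sqrt_nonneg s)]

end GaussianVector

section ResidualError

variable {d : ℕ} {s : ℝ}

/-- The leading term `(⟨ση, Hση⟩ / s - Tr[σσᵀH]) / 2` of the residual error at step size `s`, where
`H` is the spatial Hessian: the fluctuation of a quadratic form of `ση` around its mean under
`N(0, s·I_d)`. -/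
noncomputable def quadraticFluctuation (σ H : Matrix (Fin d) (Fin d) ℝ) (s : ℝ)
    (η : Fin d → ℝ) : ℝ :=
  ((σ *ᵥ η) ⬝ᵥ H *ᵥ (σ *ᵥ η) / s - (σ * σᵀ * H).trace) / 2

lemma quadraticFluctuation_eq (σ H : Matrix (Fin d) (Fin d) ℝ) (s : ℝ) (η : Fin d → ℝ) :
    quadraticFluctuation σ H s η
      = (η ⬝ᵥ (σᵀ * H * σ) *ᵥ η / s - (σᵀ * H * σ).trace) / 2 := by
  have hform : (σ *ᵥ η) ⬝ᵥ H *ᵥ (σ *ᵥ η) = η ⬝ᵥ (σᵀ * H * σ) *ᵥ η := by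
    rw [← mulVec_mulVec, ← mulVec_mulVec, dotProduct_mulVec η, vecMul_transpose]
  rw [quadraticFluctuation, hform, trace_mul_cycle σᵀ H σ]

lemma integrable_quadraticFluctuation (σ H : Matrix (Fin d) (Fin d) ℝ) (s : ℝ) :
    Integrable (quadraticFluctuation σ H s) (gaussPi d s) := by
  simp only [funext (quadraticFluctuation_eq σ H s)]
  exact (((integrable_dotProduct_mulVec memLp_eval_gaussPi memLp_eval_gaussPi _).div_const s).sub
    (integrable_const _)).div_const 2

lemma integral_quadraticFluctuation (hs : 0 < s) (σ H : Matrix (Fin d) (Fin d) ℝ) :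
    ∫ η, quadraticFluctuation σ H s η ∂(gaussPi d s) = 0 := by
  simp only [quadraticFluctuation_eq]
  rw [integral_div, integral_sub ((integrable_dotProduct_mulVec memLp_eval_gaussPi
      memLp_eval_gaussPi _).div_const s) (integrable_const _), integral_div,
    integral_dotProduct_mulVec_gaussPi hs.le, mul_div_cancel_left₀ _ hs.ne']
  simp

variable {v : ℝ → (Fin d → ℝ) → ℝ}

lemma continuous_resErr (hv : Continuous (Function.uncurry v)) (t : ℝ) (x μv : Fin d → ℝ)
    (σ : Matrix (Fin d) (Fin d) ℝ) (s : ℝ) : Continuous (resErr v μv σ t x s) := by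
  unfold resErr
  fun_prop

lemma two_mul_resErr_sub_quadraticFluctuation (hv : ContDiff ℝ 2 (Function.uncurry v)) (t : ℝ)
    (x μv : Fin d → ℝ) (σ : Matrix (Fin d) (Fin d) ℝ) (hs : s ≠ 0) (η : Fin d → ℝ) :
    2 * s * (resErr v μv σ t x s η - quadraticFluctuation σ (spatialHess v t x) s η)
      = v (t + s) (x + s • μv + σ *ᵥ η) + v (t + s) (x + s • μv - σ *ᵥ η) - 2 * v t x
        - (2 * (s * fderiv ℝ (Function.uncurry v) (t, x) (1, μv))
          + iteratedFDeriv ℝ 2 (Function.uncurry v) (t, x) fun _ => (0, σ *ᵥ η)) := by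
  have hvt : ContDiff ℝ 2 (v t) := hv.comp (contDiff_prodMk_right t)
  rw [← partialT_add_dotProduct_spatialGrad (hv.differentiable (by norm_num) _),
    ← iteratedFDeriv_eq_iteratedFDeriv_uncurry hv,
    iteratedFDeriv_two_eq_dotProduct_spatialHess hvt.contDiffAt, resErr, quadraticFluctuation]
  field_simp
  ring

lemma abs_resErr_sub_quadraticFluctuation_le (hv : ContDiff ℝ 4 (Function.uncurry v))
    {M₂ M₃ M₄ : ℝ} (hM₂ : ∀ p, ‖iteratedFDeriv ℝ 2 (Function.uncurry v) p‖ ≤ M₂)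
    (hM₃ : ∀ p, ‖iteratedFDeriv ℝ 3 (Function.uncurry v) p‖ ≤ M₃)
    (hM₄ : ∀ p, ‖iteratedFDeriv ℝ 4 (Function.uncurry v) p‖ ≤ M₄) (t : ℝ) (x μv : Fin d → ℝ)
    (σ : Matrix (Fin d) (Fin d) ℝ) (hs : 0 < s) (η : Fin d → ℝ) :
    |resErr v μv σ t x s η - quadraticFluctuation σ (spatialHess v t x) s η|
      ≤ (M₂ * ‖((1, μv) : ℝ × (Fin d → ℝ))‖ ^ 2 * s
        + M₃ * ‖((1, μv) : ℝ × (Fin d → ℝ))‖ * ‖σ *ᵥ η‖ ^ 2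
        + M₄ / 12 * (‖σ *ᵥ η‖ ^ 4 / s)) / 2 := by
  have hexpand := norm_antithetic_sub_generator_le hv hM₂ hM₃ hM₄ (t, x) (s • (1, μv))
    (0, σ *ᵥ η)
  have hw : ‖((0, σ *ᵥ η) : ℝ × (Fin d → ℝ))‖ = ‖σ *ᵥ η‖ := by simp [Prod.norm_def]
  rw [map_smul, hw, norm_smul, Real.norm_of_nonneg hs.le] at hexpand
  have hscaled : 2 * s * |resErr v μv σ t x s η - quadraticFluctuation σ (spatialHess v t x) s η|
      ≤ M₂ * (s * ‖((1, μv) : ℝ × (Fin d → ℝ))‖) ^ 2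
        + M₃ * (s * ‖((1, μv) : ℝ × (Fin d → ℝ))‖) * ‖σ *ᵥ η‖ ^ 2 + M₄ * ‖σ *ᵥ η‖ ^ 4 / 12 := by
    rw [← abs_of_pos (mul_pos two_pos hs), ← abs_mul,
      two_mul_resErr_sub_quadraticFluctuation (hv.of_le (by norm_num)) t x μv σ hs.ne']
    simpa using hexpand
  rw [← mul_le_mul_iff_right₀ (mul_pos two_pos hs)]
  refine hscaled.trans_eq ?_
  field_simp

lemma abs_integral_resErr_le (hv : ContDiff ℝ 4 (Function.uncurry v))
    {M₂ M₃ M₄ : ℝ} (hM₂ : ∀ p, ‖iteratedFDeriv ℝ 2 (Function.uncurry v) p‖ ≤ M₂)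
    (hM₃ : ∀ p, ‖iteratedFDeriv ℝ 3 (Function.uncurry v) p‖ ≤ M₃)
    (hM₄ : ∀ p, ‖iteratedFDeriv ℝ 4 (Function.uncurry v) p‖ ≤ M₄) (t : ℝ) (x μv : Fin d → ℝ)
    (σ : Matrix (Fin d) (Fin d) ℝ) (hs : 0 < s) :
    |∫ η, resErr v μv σ t x s η ∂(gaussPi d s)|
      ≤ (M₂ * ‖((1, μv) : ℝ × (Fin d → ℝ))‖ ^ 2
        + M₃ * ‖((1, μv) : ℝ × (Fin d → ℝ))‖ * gaussMoment σ 2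
        + M₄ / 12 * gaussMoment σ 4) / 2 * s := by
  set a : ℝ × (Fin d → ℝ) := (1, μv)
  have hint₂ : Integrable (fun η => M₂ * ‖a‖ ^ 2 * s + M₃ * ‖a‖ * ‖σ *ᵥ η‖ ^ 2) (gaussPi d s) :=
    (integrable_const _).add ((integrable_norm_mulVec_pow_gaussPi σ 2).const_mul _)
  have hint₄ : Integrable (fun η => M₄ / 12 * (‖σ *ᵥ η‖ ^ 4 / s)) (gaussPi d s) :=
    ((integrable_norm_mulVec_pow_gaussPi σ 4).div_const s).const_mul _
  have hs₂ : √s ^ 2 = s := Real.sq_sqrt hs.le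
  have hs₄ : √s ^ 4 = s ^ 2 := by rw [← hs₂, ← pow_mul, hs₂]
  calc |∫ η, resErr v μv σ t x s η ∂(gaussPi d s)|
      ≤ ∫ η, (M₂ * ‖a‖ ^ 2 * s + M₃ * ‖a‖ * ‖σ *ᵥ η‖ ^ 2
          + M₄ / 12 * (‖σ *ᵥ η‖ ^ 4 / s)) / 2 ∂(gaussPi d s) :=
        norm_integral_le_of_norm_sub_le (continuous_resErr hv.continuous ..).aestronglyMeasurable
          (integrable_quadraticFluctuation σ (spatialHess v t x) s) ((hint₂.add hint₄).div_const 2)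
          (integral_quadraticFluctuation hs σ _)
          (.of_forall (abs_resErr_sub_quadraticFluctuation_le hv hM₂ hM₃ hM₄ t x μv σ hs))
    _ = (M₂ * ‖a‖ ^ 2 * s + M₃ * ‖a‖ * (√s ^ 2 * gaussMoment σ 2)
          + M₄ / 12 * (√s ^ 4 * gaussMoment σ 4 / s)) / 2 := by
        rw [integral_div, integral_add hint₂ hint₄, integral_add (integrable_const _)
          ((integrable_norm_mulVec_pow_gaussPi σ 2).const_mul _)]
        simp only [integral_const_mul, integral_div, integral_norm_mulVec_pow_gaussPi σ _ hs.le,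
          integral_const, probReal_univ, one_smul]
    _ = _ := by
        rw [hs₂, hs₄]
        field_simp

end ResidualError

theorem stmt0_general {d : ℕ} (μv : Fin d → ℝ) (σ : Matrix (Fin d) (Fin d) ℝ)
    (v : ℝ → (Fin d → ℝ) → ℝ) (hv : ContDiff ℝ 4 (Function.uncurry v))
    (hbd : ∀ i : ℕ, 2 ≤ i → i ≤ 4 → ∃ B : ℝ, ∀ p : ℝ × (Fin d → ℝ),
      ‖iteratedFDeriv ℝ i (Function.uncurry v) p‖ ≤ B) :
    ∃ C : ℝ, 0 ≤ C ∧ ∀ (t : ℝ) (x : Fin d → ℝ) (Δt : ℝ), 0 < Δt →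
      |∫ η, resErr v μv σ t x Δt η ∂(gaussPi d Δt)| ≤ C * Δt := by
  obtain ⟨M₂, hM₂⟩ := hbd 2 le_rfl (by norm_num)
  obtain ⟨M₃, hM₃⟩ := hbd 3 (by norm_num) (by norm_num)
  obtain ⟨M₄, hM₄⟩ := hbd 4 (by norm_num) le_rfl
  have hM₂_nonneg : 0 ≤ M₂ := (norm_nonneg _).trans (hM₂ 0)
  have hM₃_nonneg : 0 ≤ M₃ := (norm_nonneg _).trans (hM₃ 0)
  have hM₄_nonneg : 0 ≤ M₄ := (norm_nonneg _).trans (hM₄ 0)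
  have hmoment₂ := gaussMoment_nonneg σ 2
  have hmoment₄ := gaussMoment_nonneg σ 4
  exact ⟨_, by positivity, fun t x Δt hΔt => abs_integral_resErr_le hv hM₂ hM₃ hM₄ t x μv σ hΔt⟩

/-- There exists `C ≥ 0` such that for every `Δt ∈ (0,1]`, `|E[ε(Δt)]| ≤ C·Δt`. -/
theorem stmt0 {d : ℕ} (hd : 1 ≤ d) (t : ℝ) (x μv : Fin d → ℝ) (σ : Matrix (Fin d) (Fin d) ℝ)
    (v : ℝ → (Fin d → ℝ) → ℝ) (hv : ContDiff ℝ 4 (Function.uncurry v))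
    (hbd : ∀ i : ℕ, i ≤ 4 → ∃ B : ℝ, ∀ p : ℝ × (Fin d → ℝ),
      ‖iteratedFDeriv ℝ i (Function.uncurry v) p‖ ≤ B) :
    ∃ C : ℝ, 0 ≤ C ∧ ∀ Δt : ℝ, 0 < Δt → Δt ≤ 1 →
      |∫ η, resErr v μv σ t x Δt η ∂(gaussPi d Δt)| ≤ C * Δt :=
  let ⟨C, hC, hle⟩ := stmt0_general μv σ v hv fun i _ hi => hbd i hi
  ⟨C, hC, fun Δt hΔt _ => hle t x Δt hΔt⟩
end

section
/- There exists a constant C ≥ 0 (depending only on v, μ, σ, d and the point (t,x)) such that for every Δt ∈ (0,1], the variance of the antithetic single-step residual error satisfies Var(ε(Δt)) ≤ C. -/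
open MeasureTheory ProbabilityTheory Matrix

/-
For fixed `Δt`, the residual is a deterministic constant plus the central second difference of
`v (t + Δt)` at `x + Δt μ` with step `σ η`, divided by `2 Δt`. The constant does not affect the
variance. Writing `η = √Δt z` with `z` standard Gaussian, the second difference is at most
`Δt B ‖σ‖² ‖z‖²`, where `B` bounds the second derivative of `v (t + Δt)`, so the factor `Δt` cancels
and the variance is controlled by the fourth moment of `z`. All norms on `ℝ^d` are sup norms, and
`‖σ‖` is the corresponding operator norm.
-/

section Calculus

variable {𝕜 E F G : Type*} [NontriviallyNormedField 𝕜]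
  [NormedAddCommGroup E] [NormedSpace 𝕜 E] [NormedAddCommGroup F] [NormedSpace 𝕜 F]
  [NormedAddCommGroup G] [NormedSpace 𝕜 G]

theorem norm_iteratedFDeriv_two (f : E → F) (x : E) :
    ‖iteratedFDeriv 𝕜 2 f x‖ = ‖fderiv 𝕜 (fderiv 𝕜 f) x‖ := by
  rw [← norm_iteratedFDeriv_fderiv, norm_iteratedFDeriv_one]

theorem norm_iteratedFDeriv_comp_prodMk_right_le {f : E × F → G} {n : ℕ} (hf : ContDiff 𝕜 n f)
    (x : E) (y : F) :
    ‖iteratedFDeriv 𝕜 n (fun y => f (x, y)) y‖ ≤ ‖iteratedFDeriv 𝕜 n f (x, y)‖ := by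
  let g : E × F → G := fun p => f ((x, 0) + p)
  have hg : ContDiff 𝕜 n g := hf.comp (contDiff_const.add contDiff_id)
  have hslice : (fun y => f (x, y)) = g ∘ ContinuousLinearMap.inr 𝕜 E F := by
    ext y
    simp [g]
  calc ‖iteratedFDeriv 𝕜 n (fun y => f (x, y)) y‖
      = ‖(iteratedFDeriv 𝕜 n f (x, y)).compContinuousLinearMap
          fun _ => ContinuousLinearMap.inr 𝕜 E F‖ := by
        rw [hslice, ContinuousLinearMap.iteratedFDeriv_comp_right _ hg y le_rfl,
          iteratedFDeriv_comp_add_left]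
        simp
    _ ≤ ‖iteratedFDeriv 𝕜 n f (x, y)‖ * ∏ _i : Fin n, ‖ContinuousLinearMap.inr 𝕜 E F‖ :=
        ContinuousMultilinearMap.norm_compContinuousLinearMap_le _ _
    _ ≤ ‖iteratedFDeriv 𝕜 n f (x, y)‖ :=
        mul_le_of_le_one_right (norm_nonneg _) <| Finset.prod_le_one
          (fun _ _ => norm_nonneg _) fun _ _ => ContinuousLinearMap.norm_inr_le_one 𝕜 E F

end Calculus

section CentralSecondDiff

variable {E F : Type*} [NormedAddCommGroup E] [NormedAddCommGroup F]

/-- The central second difference `f (x + h) + f (x - h) - 2 f (x)` of `f` at `x` with step `h`;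
it is the part of the residual error that depends on the Gaussian increment. The multiple `2 • f x`
is taken over `ℕ`, so that no scalar field is involved. -/
def centralSecondDiff (f : E → F) (x h : E) : F :=
  f (x + h) + f (x - h) - (2 : ℕ) • f x

theorem continuous_centralSecondDiff {f : E → F} (hf : Continuous f) (x : E) :
    Continuous (centralSecondDiff f x) := by
  unfold centralSecondDiff
  fun_prop

variable [NormedSpace ℝ E] [NormedSpace ℝ F]

theorem hasDerivAt_centralSecondDiff_smul {f : E → F} (hf : Differentiable ℝ f) (x h : E) (r : ℝ) :
    HasDerivAt (fun r : ℝ => centralSecondDiff f x (r • h))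
      ((fderiv ℝ f (x + r • h) - fderiv ℝ f (x - r • h)) h) r := by
  have hline : HasDerivAt (fun r : ℝ => r • h) h r := by
    simpa using (hasDerivAt_id r).smul_const h
  have hadd : HasDerivAt (fun r : ℝ => f (x + r • h)) (fderiv ℝ f (x + r • h) h) r :=
    (hf _).hasFDerivAt.comp_hasDerivAt r (hline.const_add x)
  have hsub : HasDerivAt (fun r : ℝ => f (x - r • h)) (fderiv ℝ f (x - r • h) (-h)) r :=
    (hf _).hasFDerivAt.comp_hasDerivAt r (hline.const_sub x)
  simpa [centralSecondDiff, sub_eq_add_neg] using (hadd.add hsub).sub_const ((2 : ℕ) • f x)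

theorem norm_centralSecondDiff_le_of_lipschitzWith_fderiv {f : E → F} {K : NNReal}
    (hf : Differentiable ℝ f) (hK : LipschitzWith K (fderiv ℝ f)) (x h : E) :
    ‖centralSecondDiff f x h‖ ≤ K * ‖h‖ ^ 2 := by
  have hder := hasDerivAt_centralSecondDiff_smul hf x h
  have hbound : ∀ r ∈ Set.Ico (0 : ℝ) 1,
      ‖(fderiv ℝ f (x + r • h) - fderiv ℝ f (x - r • h)) h‖ ≤ K * ‖h‖ ^ 2 * (2 * r) := by
    intro r hr
    have hstep : ‖(x + r • h) - (x - r • h)‖ = 2 * r * ‖h‖ := by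
      rw [add_sub_sub_cancel, ← two_smul ℝ, smul_smul, norm_smul,
        Real.norm_of_nonneg (mul_nonneg zero_le_two hr.1)]
    calc ‖(fderiv ℝ f (x + r • h) - fderiv ℝ f (x - r • h)) h‖
        ≤ ‖fderiv ℝ f (x + r • h) - fderiv ℝ f (x - r • h)‖ * ‖h‖ :=
          ContinuousLinearMap.le_opNorm _ _
      _ ≤ K * (2 * r * ‖h‖) * ‖h‖ := by
          gcongr
          exact hstep ▸ hK.norm_sub_le _ _
      _ = K * ‖h‖ ^ 2 * (2 * r) := by ring
  have hparabola (r : ℝ) :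
      HasDerivAt (fun r : ℝ => K * ‖h‖ ^ 2 * r ^ 2) (K * ‖h‖ ^ 2 * (2 * r)) r := by
    simpa using (hasDerivAt_pow 2 r).const_mul (K * ‖h‖ ^ 2)
  simpa using image_norm_le_of_norm_deriv_right_le_deriv_boundary
    (fun r _ => (hder r).continuousAt.continuousWithinAt)
    (fun r _ => (hder r).hasDerivWithinAt) (by simp [centralSecondDiff, two_nsmul])
    hparabola hbound (Set.right_mem_Icc.mpr zero_le_one)

theorem norm_centralSecondDiff_le {f : E → F} {B : ℝ} (hf : ContDiff ℝ 2 f)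
    (hB : ∀ y, ‖iteratedFDeriv ℝ 2 f y‖ ≤ B) (x h : E) :
    ‖centralSecondDiff f x h‖ ≤ B * ‖h‖ ^ 2 := by
  lift B to NNReal using (norm_nonneg _).trans (hB x)
  have hf' : Differentiable ℝ (fderiv ℝ f) :=
    (hf.fderiv_right (m := 1) le_rfl).differentiable one_ne_zero
  refine norm_centralSecondDiff_le_of_lipschitzWith_fderiv (hf.differentiable two_ne_zero)
    (lipschitzWith_of_nnnorm_fderiv_le hf' fun y => ?_) x h
  rw [← NNReal.coe_le_coe, coe_nnnorm, ← norm_iteratedFDeriv_two]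
  exact hB y

end CentralSecondDiff

section Gaussian

instance isProbabilityMeasure_gaussPi (d : ℕ) (s : ℝ) : IsProbabilityMeasure (gaussPi d s) := by
  unfold gaussPi
  infer_instance

theorem memLp_id_gaussPi (d : ℕ) (s : ℝ) {p : ENNReal} (hp : p ≠ ⊤) :
    MemLp id p (gaussPi d s) :=
  .of_eval fun i => (memLp_id_gaussianReal' p hp).comp_measurePreserving
    (measurePreserving_eval (fun _ : Fin d => gaussianReal 0 s.toNNReal) i)

theorem measurePreserving_sqrt_smul_gaussPi (d : ℕ) {s : ℝ} (hs : 0 ≤ s) :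
    MeasurePreserving (fun z : Fin d → ℝ => √s • z) (gaussPi d 1) (gaussPi d s) := by
  have hcoord : MeasurePreserving (√s * ·) (gaussianReal 0 (1 : ℝ).toNNReal)
      (gaussianReal 0 s.toNNReal) := by
    refine ⟨by fun_prop, ?_⟩
    rw [gaussianReal_map_const_mul]
    congr 1
    · simp
    · ext
      simp [Real.sq_sqrt hs, hs]
  exact measurePreserving_pi _ _ fun _ => hcoord

end Gaussian

theorem variance_le_integral_sq_of_abs_le {Ω : Type*} [MeasurableSpace Ω] {P : Measure Ω}
    [IsProbabilityMeasure P] {X Y : Ω → ℝ} (hX : AEStronglyMeasurable X P)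
    (hY : Integrable (fun ω => Y ω ^ 2) P) (hXY : ∀ ω, |X ω| ≤ Y ω) :
    Var[X; P] ≤ ∫ ω, Y ω ^ 2 ∂P :=
  (variance_le_expectation_sq hX).trans <| integral_mono_of_nonneg
    (.of_forall fun _ => sq_nonneg _) hY
    (.of_forall fun ω => sq_le_sq' (abs_le.mp (hXY ω)).1 (abs_le.mp (hXY ω)).2)

section Residual

variable {d : ℕ} {v : ℝ → (Fin d → ℝ) → ℝ} (μv : Fin d → ℝ) (σ : Matrix (Fin d) (Fin d) ℝ)
  (t : ℝ) (x : Fin d → ℝ) {Δt : ℝ}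

theorem resErr_eq_centralSecondDiff_add (η : Fin d → ℝ) :
    resErr v μv σ t x Δt η =
      centralSecondDiff (v (t + Δt)) (x + Δt • μv) (σ *ᵥ η) / (2 * Δt)
        + resErr v μv σ t x Δt 0 := by
  simp only [resErr, centralSecondDiff, mulVec_zero, add_zero, sub_zero, nsmul_eq_mul]
  ring

theorem variance_resErr_eq_variance_centralSecondDiff (hv : Continuous (v (t + Δt)))
    (P : Measure (Fin d → ℝ)) [IsProbabilityMeasure P] :
    Var[resErr v μv σ t x Δt; P] =
      Var[fun η => centralSecondDiff (v (t + Δt)) (x + Δt • μv) (σ *ᵥ η) / (2 * Δt); P] := by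
  have hcont := continuous_centralSecondDiff hv (x + Δt • μv)
  rw [funext (resErr_eq_centralSecondDiff_add μv σ t x),
    variance_add_const (Continuous.aestronglyMeasurable (by fun_prop))]

open scoped Matrix.Norms.Operator in
theorem abs_centralSecondDiff_mulVec_sqrt_smul_le {f : (Fin d → ℝ) → ℝ} {B s : ℝ}
    (hf : ContDiff ℝ 2 f) (hB : ∀ y, ‖iteratedFDeriv ℝ 2 f y‖ ≤ B) (hs : 0 < s)
    (z : Fin d → ℝ) :
    |centralSecondDiff f x (σ *ᵥ (√s • z)) / (2 * s)| ≤ B * ‖σ‖ ^ 2 / 2 * ‖z‖ ^ 2 := by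
  have hB0 : 0 ≤ B := (norm_nonneg _).trans (hB x)
  rw [abs_div, abs_of_pos (mul_pos two_pos hs), div_le_iff₀ (mul_pos two_pos hs)]
  calc |centralSecondDiff f x (σ *ᵥ (√s • z))| ≤ B * ‖σ *ᵥ (√s • z)‖ ^ 2 :=
        norm_centralSecondDiff_le hf hB _ _
    _ ≤ B * (‖σ‖ * (√s * ‖z‖)) ^ 2 := by
        gcongr
        simpa [norm_smul, abs_of_nonneg (Real.sqrt_nonneg s)] using linfty_opNorm_mulVec σ (√s • z)
    _ = B * ‖σ‖ ^ 2 / 2 * ‖z‖ ^ 2 * (2 * s) := by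
        rw [mul_pow, mul_pow, Real.sq_sqrt hs.le]
        ring

open scoped Matrix.Norms.Operator in
theorem stmt1_general {B : ℝ} (hv : ContDiff ℝ 2 (Function.uncurry v))
    (hB : ∀ s y, ‖iteratedFDeriv ℝ 2 (v s) y‖ ≤ B) (hΔt : 0 < Δt) :
    Var[resErr v μv σ t x Δt; gaussPi d Δt] ≤
      (B * ‖σ‖ ^ 2 / 2) ^ 2 * ∫ z, ‖z‖ ^ 4 ∂gaussPi d 1 := by
  have hf : ContDiff ℝ 2 (v (t + Δt)) := hv.comp (contDiff_prodMk_right (t + Δt))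
  have hcont := continuous_centralSecondDiff hf.continuous (x + Δt • μv)
  have hsq (z : Fin d → ℝ) :
      (B * ‖σ‖ ^ 2 / 2 * ‖z‖ ^ 2) ^ 2 = (B * ‖σ‖ ^ 2 / 2) ^ 2 * ‖z‖ ^ 4 := by ring
  have hmoment : Integrable (fun z : Fin d → ℝ => ‖z‖ ^ 4) (gaussPi d 1) :=
    (memLp_id_gaussPi d 1 (by simp)).integrable_norm_pow four_ne_zero
  calc Var[resErr v μv σ t x Δt; gaussPi d Δt]
      = Var[fun η => centralSecondDiff (v (t + Δt)) (x + Δt • μv) (σ *ᵥ η) / (2 * Δt);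
          gaussPi d Δt] := variance_resErr_eq_variance_centralSecondDiff μv σ t x hf.continuous _
    _ = Var[fun z => centralSecondDiff (v (t + Δt)) (x + Δt • μv) (σ *ᵥ (√Δt • z)) / (2 * Δt);
          gaussPi d 1] :=
        ((measurePreserving_sqrt_smul_gaussPi d hΔt.le).variance_fun_comp
          (Continuous.aemeasurable (by fun_prop))).symm
    _ ≤ ∫ z, (B * ‖σ‖ ^ 2 / 2 * ‖z‖ ^ 2) ^ 2 ∂gaussPi d 1 :=
        variance_le_integral_sq_of_abs_le (Continuous.aestronglyMeasurable (by fun_prop))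
          (by simpa only [hsq] using hmoment.const_mul _)
          (abs_centralSecondDiff_mulVec_sqrt_smul_le σ _ hf (hB _) hΔt)
    _ = (B * ‖σ‖ ^ 2 / 2) ^ 2 * ∫ z, ‖z‖ ^ 4 ∂gaussPi d 1 := by
        simp only [hsq, integral_const_mul]

end Residual

/-- There exists `C ≥ 0` such that for every `Δt ∈ (0,1]`, `Var(ε(Δt)) ≤ C`. -/
theorem stmt1 {d : ℕ} (hd : 1 ≤ d) (t : ℝ) (x μv : Fin d → ℝ) (σ : Matrix (Fin d) (Fin d) ℝ)
    (v : ℝ → (Fin d → ℝ) → ℝ) (hv : ContDiff ℝ 4 (Function.uncurry v))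
    (hbd : ∀ i : ℕ, i ≤ 4 → ∃ B : ℝ, ∀ p : ℝ × (Fin d → ℝ),
      ‖iteratedFDeriv ℝ i (Function.uncurry v) p‖ ≤ B) :
    ∃ C : ℝ, 0 ≤ C ∧ ∀ Δt : ℝ, 0 < Δt → Δt ≤ 1 →
      variance (resErr v μv σ t x Δt) (gaussPi d Δt) ≤ C := by
  obtain ⟨B, hB⟩ := hbd 2 (by norm_num)
  exact ⟨_, by positivity, fun Δt hΔt _ => stmt1_general μv σ t x (hv.of_le (by norm_num))
    (fun s y => (norm_iteratedFDeriv_comp_prodMk_right_le (hv.of_le (by norm_num)) s y).trans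
      (hB (s, y))) hΔt⟩
end

section
/- The variance of the antithetic single-step residual error converges, as Δt → 0⁺, to (1/2)·Tr[(σᵀ ∇²_x v(t,x) σ)²]; more precisely, there exists a constant C ≥ 0 such that for all Δt ∈ (0,1], |Var(ε(Δt)) − (1/2)·Tr[(σᵀ ∇²_x v(t,x) σ)²]| ≤ C·Δt. -/
open MeasureTheory ProbabilityTheory Matrix

/-!
Write `η = √Δt • Z` with `Z` standard Gaussian. The antithetic combination `F (q + w) + F (q - w)`
is even in the noise displacement `w`, so its odd-order Taylor terms cancel and
`ε = const + ½ ⟪Z, σᵀ ∇²v σ Z⟫ + R`, where the remainder satisfies `|R| ≤ Δt (a ‖Z‖² + b ‖Z‖⁴)`.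
The constant does not affect the variance. Perturbing a square-integrable variable by an `O(Δt)`
error in `L²` changes its variance by `O(Δt)`, the covariance term being absorbed by AM–GM.
Finally, diagonalising a symmetric operator `T` writes `⟪Z, T Z⟫` as a weighted sum of independent
squared standard normals, each of variance `2`, whence `Var ⟪Z, T Z⟫ = 2 Tr T²`.
-/

section Gaussian

open scoped NNReal Nat ENNReal InnerProductSpace

lemma map_sqrt_mul_gaussianReal (v : ℝ≥0) :
    (gaussianReal 0 1).map (fun y ↦ √(v : ℝ) * y) = gaussianReal 0 v := by
  rw [gaussianReal_map_const_mul]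
  congr 1
  · simp
  · ext
    simp

-- At `n = 0` the truncated subtraction gives `0‼ = 1`, which is the correct value.
lemma integral_Ioi_pow_two_mul_mul_exp_neg_sq_div_two (n : ℕ) :
    ∫ y in Set.Ioi (0 : ℝ), y ^ (2 * n) * Real.exp (-y ^ 2 / 2)
      = √2 * √Real.pi / 2 * (2 * n - 1)‼ := by
  have h := integral_rpow_mul_exp_neg_mul_rpow (p := 2) (q := (2 * n : ℕ)) (b := 1 / 2)
    two_pos (neg_one_lt_zero.trans_le (Nat.cast_nonneg _)) one_half_pos
  have hexp (y : ℝ) : -(1 / 2) * y ^ 2 = -y ^ 2 / 2 := by ring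
  have hdiv : (((2 * n : ℕ) : ℝ) + 1) / 2 = n + 1 / 2 := by push_cast; ring
  have hpow : (1 / 2 : ℝ) ^ (-((n : ℝ) + 1 / 2)) = 2 ^ n * √2 := by
    rw [one_div, Real.inv_rpow zero_le_two, ← Real.rpow_neg zero_le_two, neg_neg,
      Real.rpow_add two_pos, Real.rpow_natCast, Real.sqrt_eq_rpow, one_div]
  simp only [Real.rpow_natCast, Real.rpow_two, hexp] at h
  rw [h, neg_div, hdiv, hpow, Real.Gamma_nat_add_half]
  field_simp

lemma integral_pow_two_mul_gaussianReal (v : ℝ≥0) (n : ℕ) :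
    ∫ y, y ^ (2 * n) ∂gaussianReal 0 v = v ^ n * (2 * n - 1)‼ := by
  have hstd : ∫ y, y ^ (2 * n) ∂gaussianReal 0 1 = (2 * n - 1)‼ := by
    have heven := integral_comp_abs (f := fun y ↦ y ^ (2 * n) * Real.exp (-y ^ 2 / 2))
    simp only [pow_mul, sq_abs] at heven
    rw [integral_gaussianReal_eq_integral_smul one_ne_zero]
    simp only [gaussianPDFReal, smul_eq_mul, NNReal.coe_one, sub_zero, mul_one, mul_assoc,
      integral_const_mul, mul_comm (Real.exp _)]
    simp only [pow_mul, heven]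
    simp only [← pow_mul, integral_Ioi_pow_two_mul_mul_exp_neg_sq_div_two]
    rw [Real.sqrt_mul zero_le_two]
    field_simp
  rw [← map_sqrt_mul_gaussianReal v, integral_map (by fun_prop) (by fun_prop)]
  simp only [mul_pow, integral_const_mul, hstd]
  rw [pow_mul, Real.sq_sqrt v.coe_nonneg]

lemma memLp_norm_pow {Ω E : Type*} [MeasurableSpace Ω] {μ : Measure Ω} [NormedAddCommGroup E]
    {f : Ω → E} {p : ℝ≥0∞} {k : ℕ} (hk : k ≠ 0) (hf : MemLp f (k * p) μ) :
    MemLp (fun ω ↦ ‖f ω‖ ^ k) p μ := by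
  have hk' : (k : ℝ≥0∞) ≠ 0 := by exact_mod_cast hk
  have h := hf.norm_rpow_div k
  rw [mul_comm, ENNReal.mul_div_cancel_right hk' (ENNReal.natCast_ne_top k)] at h
  simpa using h

lemma memLp_norm_clm_pow_of_isGaussian {E G : Type*} [NormedAddCommGroup E] [NormedSpace ℝ E]
    [MeasurableSpace E] [BorelSpace E] [CompleteSpace E] [SecondCountableTopology E]
    [NormedAddCommGroup G] [NormedSpace ℝ G] (γ : Measure E) [IsGaussian γ]
    (L : E →L[ℝ] G) {p : ℝ≥0∞} (hp : p ≠ ∞) (k : ℕ) :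
    MemLp (fun z ↦ ‖L z‖ ^ k) p γ := by
  rcases eq_or_ne k 0 with rfl | hk
  · simpa only [pow_zero] using memLp_const (1 : ℝ)
  · refine memLp_norm_pow hk (L.comp_memLp' (IsGaussian.memLp_id γ _ ?_))
    finiteness

lemma memLp_sq_gaussianReal (v : ℝ≥0) {p : ℝ≥0∞} (hp : p ≠ ∞) :
    MemLp (fun y ↦ y ^ 2) p (gaussianReal 0 v) := by
  simpa using memLp_norm_clm_pow_of_isGaussian (gaussianReal 0 v) (.id ℝ ℝ) hp 2

lemma variance_sq_gaussianReal (v : ℝ≥0) :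
    Var[fun y ↦ y ^ 2; gaussianReal 0 v] = 2 * v ^ 2 := by
  have h2 : ∫ y, y ^ 2 ∂gaussianReal 0 v = v := by
    simpa using integral_pow_two_mul_gaussianReal v 1
  have h4 : ∫ y, (y ^ 2) ^ 2 ∂gaussianReal 0 v = 3 * v ^ 2 := by
    simpa [← pow_mul, Nat.doubleFactorial, mul_comm] using integral_pow_two_mul_gaussianReal v 2
  rw [variance_eq_sub (memLp_sq_gaussianReal v ENNReal.ofNat_ne_top)]
  simp only [Pi.pow_apply, h4, h2]
  ring

variable {E : Type*} [NormedAddCommGroup E] [InnerProductSpace ℝ E] [FiniteDimensional ℝ E]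

lemma trace_sq_eq_sum_eigenvalues_sq {T : E →ₗ[ℝ] E} (hT : T.IsSymmetric) {n : ℕ}
    (hn : Module.finrank ℝ E = n) :
    (T ^ 2).trace ℝ E = ∑ i, hT.eigenvalues hn i ^ 2 := by
  rw [(T ^ 2).trace_eq_sum_inner (hT.eigenvectorBasis hn)]
  simp [pow_two, hT.apply_eigenvectorBasis, real_inner_smul_right, mul_comm]

lemma inner_apply_sum_eigenvectorBasis {T : E →ₗ[ℝ] E} (hT : T.IsSymmetric) {n : ℕ}
    (hn : Module.finrank ℝ E = n) (z : Fin n → ℝ) :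
    ⟪∑ i, z i • hT.eigenvectorBasis hn i, T (∑ i, z i • hT.eigenvectorBasis hn i)⟫_ℝ
      = ∑ i, hT.eigenvalues hn i * z i ^ 2 := by
  simp only [map_sum, map_smul, hT.apply_eigenvectorBasis, smul_smul,
    (hT.eigenvectorBasis hn).orthonormal.inner_sum]
  refine Finset.sum_congr rfl fun i _ ↦ ?_
  simp only [Real.ringHom_apply]
  ring

variable [MeasurableSpace E] [BorelSpace E]

lemma variance_inner_apply_self_stdGaussian {T : E →ₗ[ℝ] E} (hT : T.IsSymmetric) :
    Var[fun z ↦ ⟪z, T z⟫_ℝ; stdGaussian E] = 2 * (T ^ 2).trace ℝ E := by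
  set b := hT.eigenvectorBasis rfl
  set eig := hT.eigenvalues rfl
  have hmeas : Measurable fun z ↦ ⟪z, T z⟫_ℝ :=
    (continuous_id.inner T.continuous_of_finiteDimensional).measurable
  have hmap : Measurable fun y : Fin (Module.finrank ℝ E) → ℝ ↦ ∑ i, y i • b i := by fun_prop
  calc Var[fun z ↦ ⟪z, T z⟫_ℝ; stdGaussian E]
      = Var[∑ i, fun y ↦ eig i * y i ^ 2; Measure.pi fun _ ↦ gaussianReal 0 1] := by
        rw [stdGaussian_eq_map_pi_orthonormalBasis b,
          variance_map hmeas.aemeasurable hmap.aemeasurable]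
        congr 1
        ext y
        rw [Finset.sum_apply]
        exact inner_apply_sum_eigenvectorBasis hT rfl y
    _ = ∑ i, Var[fun y ↦ eig i * y ^ 2; gaussianReal 0 1] :=
        variance_sum_pi (X := fun i y ↦ eig i * y ^ 2) fun i ↦
          (memLp_sq_gaussianReal 1 ENNReal.ofNat_ne_top).const_mul (eig i)
    _ = ∑ i, 2 * eig i ^ 2 := by
        simp only [variance_const_mul, variance_sq_gaussianReal, NNReal.coe_one, one_pow, mul_one,
          mul_comm _ (2 : ℝ)]
    _ = 2 * (T ^ 2).trace ℝ E := by
        rw [trace_sq_eq_sum_eigenvalues_sq hT rfl, Finset.mul_sum]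

end Gaussian

section Perturbation

variable {Ω : Type*} [MeasurableSpace Ω] {γ : Measure Ω}

lemma two_mul_abs_covariance_le [IsFiniteMeasure γ] {X Y : Ω → ℝ} (hX : MemLp X 2 γ)
    (hY : MemLp Y 2 γ) {c : ℝ} (hc : 0 < c) :
    2 * |cov[X, Y; γ]| ≤ c * Var[X; γ] + c⁻¹ * Var[Y; γ] := by
  have hadd := variance_nonneg (fun ω ↦ c * X ω + Y ω) γ
  have hsub := variance_nonneg (fun ω ↦ c * X ω - Y ω) γ
  rw [variance_fun_add (hX.const_mul c) hY, variance_const_mul, covariance_const_mul_left] at hadd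
  rw [variance_fun_sub (hX.const_mul c) hY, variance_const_mul, covariance_const_mul_left] at hsub
  have hcov : c * (2 * |cov[X, Y; γ]|) ≤ c ^ 2 * Var[X; γ] + Var[Y; γ] := by
    rcases abs_cases cov[X, Y; γ] with ⟨h, -⟩ | ⟨h, -⟩ <;> rw [h] <;> linarith
  calc 2 * |cov[X, Y; γ]| = c⁻¹ * (c * (2 * |cov[X, Y; γ]|)) := by field_simp
    _ ≤ c⁻¹ * (c ^ 2 * Var[X; γ] + Var[Y; γ]) := by gcongr
    _ = c * Var[X; γ] + c⁻¹ * Var[Y; γ] := by field_simp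

lemma variance_le_sq_mul_integral_sq [IsProbabilityMeasure γ] {Y G : Ω → ℝ}
    (hY : AEStronglyMeasurable Y γ) (hG : MemLp G 2 γ) {c : ℝ} (hYG : ∀ᵐ ω ∂γ, |Y ω| ≤ c * G ω) :
    Var[Y; γ] ≤ c ^ 2 * ∫ ω, G ω ^ 2 ∂γ := by
  rw [← integral_const_mul]
  refine (variance_le_expectation_sq hY).trans
    (integral_mono_of_nonneg (.of_forall fun ω ↦ sq_nonneg _) (hG.integrable_sq.const_mul _) ?_)
  filter_upwards [hYG] with ω hω
  rw [← mul_pow, Pi.pow_apply]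
  exact sq_le_sq.2 (hω.trans (le_abs_self _))

lemma abs_variance_add_sub_variance_le [IsProbabilityMeasure γ] {X Y G : Ω → ℝ} {h : ℝ}
    (hX : MemLp X 2 γ) (hY : AEStronglyMeasurable Y γ) (hG : MemLp G 2 γ) (h0 : 0 < h) (h1 : h ≤ 1)
    (hYG : ∀ᵐ ω ∂γ, |Y ω| ≤ h * G ω) :
    |Var[X + Y; γ] - Var[X; γ]| ≤ (Var[X; γ] + 2 * ∫ ω, G ω ^ 2 ∂γ) * h := by
  have hY2 : MemLp Y 2 γ := hG.of_le_mul (c := h) hY <| by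
    filter_upwards [hYG] with ω hω
    exact hω.trans (mul_le_mul_of_nonneg_left (le_abs_self _) h0.le)
  have hVarY : Var[Y; γ] ≤ h ^ 2 * ∫ ω, G ω ^ 2 ∂γ := variance_le_sq_mul_integral_sq hY hG hYG
  rw [variance_add hX hY2, add_sub_right_comm, add_sub_right_comm, sub_self, zero_add]
  calc |2 * cov[X, Y; γ] + Var[Y; γ]| ≤ 2 * |cov[X, Y; γ]| + Var[Y; γ] := by
        refine (abs_add_le _ _).trans_eq ?_
        rw [abs_mul, abs_two, abs_of_nonneg (variance_nonneg Y γ)]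
    _ ≤ (h * Var[X; γ] + h⁻¹ * Var[Y; γ]) + Var[Y; γ] := by
        gcongr
        exact two_mul_abs_covariance_le hX hY2 h0
    _ ≤ (h * Var[X; γ] + h⁻¹ * (h ^ 2 * ∫ ω, G ω ^ 2 ∂γ)) + h ^ 2 * ∫ ω, G ω ^ 2 ∂γ := by gcongr
    _ = (Var[X; γ] + (1 + h) * ∫ ω, G ω ^ 2 ∂γ) * h := by field_simp; ring
    _ ≤ (Var[X; γ] + 2 * ∫ ω, G ω ^ 2 ∂γ) * h := by gcongr; linarith

end Perturbation

section Taylor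

variable {V W : Type*} [NormedAddCommGroup V] [NormedSpace ℝ V] [NormedAddCommGroup W]
  [NormedSpace ℝ W]

lemma iteratedDeriv_comp_add_smul {F : V → W} {n : ℕ} (hF : ContDiff ℝ n F) (q w : V) (s : ℝ) :
    iteratedDeriv n (fun r : ℝ ↦ F (q + r • w)) s
      = iteratedFDeriv ℝ n F (q + s • w) (fun _ ↦ w) := by
  have hG : ContDiff ℝ n (fun z ↦ F (q + z)) := by fun_prop
  have h := (ContinuousLinearMap.toSpanSingleton ℝ w).iteratedFDeriv_comp_right hG s le_rfl
  rw [iteratedFDeriv_comp_add_left] at h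
  simpa [iteratedDeriv_eq_iteratedFDeriv, Function.comp_def] using congr($h fun _ ↦ 1)

lemma norm_iteratedFDeriv_apply_const_le (F : V → W) (n : ℕ) (q w : V) :
    ‖iteratedFDeriv ℝ n F q (fun _ ↦ w)‖ ≤ ‖iteratedFDeriv ℝ n F q‖ * ‖w‖ ^ n := by
  simpa using (iteratedFDeriv ℝ n F q).le_opNorm fun _ ↦ w

lemma iteratedDeriv_add_comp_neg {f : ℝ → W} {n : ℕ} (hf : ContDiff ℝ n f) (s : ℝ) :
    iteratedDeriv n (fun r ↦ f r + f (-r)) s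
      = iteratedDeriv n f s + (-1 : ℝ) ^ n • iteratedDeriv n f (-s) := by
  rw [iteratedDeriv_fun_add (by fun_prop) (by fun_prop), iteratedDeriv_comp_neg]

lemma norm_centralDiff_sub_iteratedDeriv_two_le {f : ℝ → W} (hf : ContDiff ℝ 4 f) {B : ℝ}
    (hB : ∀ s, ‖iteratedDeriv 4 f s‖ ≤ B) :
    ‖f 1 + f (-1) - (2 : ℝ) • f 0 - iteratedDeriv 2 f 0‖ ≤ B / 3 := by
  -- Since `g` is even, its first and third derivatives vanish at `0`.
  set g : ℝ → W := fun s ↦ f s + f (-s)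
  have hg : ContDiff ℝ 4 g := by fun_prop
  have hderiv {n : ℕ} (hn : n ≤ 4) {s : ℝ} (hs : s ∈ Set.Icc (0 : ℝ) 1) :
      iteratedDerivWithin n g (Set.Icc 0 1) s
        = iteratedDeriv n f s + (-1 : ℝ) ^ n • iteratedDeriv n f (-s) := by
    have hn' : (n : WithTop ℕ∞) ≤ 4 := by exact_mod_cast hn
    rw [iteratedDerivWithin_eq_iteratedDeriv (uniqueDiffOn_Icc one_pos)
      (hg.contDiffAt.of_le hn') hs, iteratedDeriv_add_comp_neg (hf.of_le hn')]
  have hg4 : ∀ s ∈ Set.Icc (0 : ℝ) 1, ‖iteratedDerivWithin 4 g (Set.Icc 0 1) s‖ ≤ 2 * B := by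
    intro s hs
    rw [hderiv le_rfl hs, Even.neg_one_pow (by decide), one_smul]
    linarith [norm_add_le (iteratedDeriv 4 f s) (iteratedDeriv 4 f (-s)), hB s, hB (-s)]
  have h0 : (0 : ℝ) ∈ Set.Icc (0 : ℝ) 1 := ⟨le_rfl, zero_le_one⟩
  have htaylor : taylorWithinEval g 3 (Set.Icc 0 1) 0 1 = (2 : ℝ) • f 0 + iteratedDeriv 2 f 0 := by
    have hterm (n : ℕ) (hn : n ≤ 4) : iteratedDerivWithin n g (Set.Icc 0 1) 0
        = (1 + (-1 : ℝ) ^ n) • iteratedDeriv n f 0 := by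
      rw [hderiv hn h0, neg_zero, add_smul, one_smul]
    simp only [taylor_within_apply, Finset.sum_range_succ, Finset.sum_range_zero, sub_zero,
      one_pow, mul_one, hterm 0 (by decide), hterm 1 (by decide), hterm 2 (by decide),
      hterm 3 (by decide), iteratedDeriv_zero, Nat.factorial]
    module
  have hbound := taylor_mean_remainder_bound zero_le_one (n := 3) (f := g) hg.contDiffOn
    ⟨zero_le_one, le_rfl⟩ hg4
  rw [htaylor, ← sub_sub] at hbound
  refine hbound.trans_eq ?_
  norm_num [Nat.factorial]
  ring

lemma norm_centralDiff_sub_iteratedFDeriv_two_le {F : V → W} (hF : ContDiff ℝ 4 F) {B : ℝ}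
    (hB : ∀ p, ‖iteratedFDeriv ℝ 4 F p‖ ≤ B) (q w : V) :
    ‖F (q + w) + F (q - w) - (2 : ℝ) • F q - iteratedFDeriv ℝ 2 F q (fun _ ↦ w)‖
      ≤ B / 3 * ‖w‖ ^ 4 := by
  have hline : ∀ s, ‖iteratedDeriv 4 (fun r : ℝ ↦ F (q + r • w)) s‖ ≤ B * ‖w‖ ^ 4 := fun s ↦ by
    rw [iteratedDeriv_comp_add_smul hF]
    refine (norm_iteratedFDeriv_apply_const_le F 4 _ w).trans ?_
    gcongr
    exact hB _
  have h := norm_centralDiff_sub_iteratedDeriv_two_le (by fun_prop) hline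
  rw [iteratedDeriv_comp_add_smul (hF.of_le (by norm_num))] at h
  simpa [← sub_eq_add_neg, div_mul_eq_mul_div] using h

lemma exists_norm_comp_add_smul_sub_le {g : V → W} (hg : ContDiff ℝ 1 g) (p u : V) :
    ∃ K : ℝ, ∀ h : ℝ, 0 ≤ h → h ≤ 1 → ‖g (p + h • u) - g p‖ ≤ K * h := by
  have hline : ContDiff ℝ 1 fun s : ℝ ↦ g (p + s • u) := by fun_prop
  obtain ⟨K, hK⟩ := hline.contDiffOn.exists_lipschitzOnWith one_ne_zero (convex_Icc (0 : ℝ) 1)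
    isCompact_Icc
  refine ⟨K, fun h h0 h1 ↦ ?_⟩
  simpa [abs_of_nonneg h0] using hK.norm_sub_le (x := h) ⟨h0, h1⟩ (y := 0) ⟨le_rfl, zero_le_one⟩

end Taylor

section Antithetic

open scoped ENNReal InnerProductSpace

variable {V : Type*} [NormedAddCommGroup V] [NormedSpace ℝ V]

lemma memLp_iteratedFDeriv_clm_of_isGaussian {E W : Type*} [NormedAddCommGroup E] [NormedSpace ℝ E]
    [MeasurableSpace E] [BorelSpace E] [CompleteSpace E] [SecondCountableTopology E]
    [NormedAddCommGroup W] [NormedSpace ℝ W] (γ : Measure E) [IsGaussian γ] (F : V → W) (n : ℕ)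
    (p : V) (L : E →L[ℝ] V) {r : ℝ≥0∞} (hr : r ≠ ∞) :
    MemLp (fun z ↦ iteratedFDeriv ℝ n F p (fun _ ↦ L z)) r γ := by
  have hcont : Continuous fun z ↦ iteratedFDeriv ℝ n F p (fun _ ↦ L z) := by fun_prop
  refine (memLp_norm_clm_pow_of_isGaussian γ L hr n).of_le_mul (c := ‖iteratedFDeriv ℝ n F p‖)
    hcont.aestronglyMeasurable (.of_forall fun z ↦ ?_)
  simpa using norm_iteratedFDeriv_apply_const_le F n p (L z)

/-- Average over the antithetic noise displacements `±w` of the difference quotient of `F` along a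
step of length `h` from `p` with drift `u`. -/
noncomputable def antitheticQuotient (F : V → ℝ) (p u : V) (h : ℝ) (w : V) : ℝ :=
  (F (p + h • u + w) + F (p + h • u - w) - 2 * F p) / (2 * h)

lemma continuous_antitheticQuotient {F : V → ℝ} (hF : Continuous F) (p u : V) (h : ℝ) :
    Continuous (antitheticQuotient F p u h) := by
  unfold antitheticQuotient
  fun_prop

lemma abs_antitheticQuotient_sqrt_smul_sub_le {F : V → ℝ} (hF : ContDiff ℝ 4 F) {B K h : ℝ}
    (hB : ∀ q, ‖iteratedFDeriv ℝ 4 F q‖ ≤ B) (h0 : 0 < h) {p u : V}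
    (hK : ‖iteratedFDeriv ℝ 2 F (p + h • u) - iteratedFDeriv ℝ 2 F p‖ ≤ K * h) (w : V) :
    |antitheticQuotient F p u h (√h • w) - (F (p + h • u) - F p) / h
        - 1 / 2 * iteratedFDeriv ℝ 2 F p (fun _ ↦ w)|
      ≤ h * (K / 2 * ‖w‖ ^ 2 + B / 6 * ‖w‖ ^ 4) := by
  set q := p + h • u
  have hsq : √h ^ 2 = h := Real.sq_sqrt h0.le
  have hhom : iteratedFDeriv ℝ 2 F q (fun _ ↦ √h • w) = h * iteratedFDeriv ℝ 2 F q (fun _ ↦ w) := by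
    simpa [hsq] using (iteratedFDeriv ℝ 2 F q).map_smul_univ (fun _ ↦ √h) (fun _ ↦ w)
  have hpow : ‖√h • w‖ ^ 4 = h ^ 2 * ‖w‖ ^ 4 := by
    rw [norm_smul, Real.norm_of_nonneg (Real.sqrt_nonneg h), mul_pow, pow_mul (√h) 2 2, hsq]
  have hdiff : |F (q + √h • w) + F (q - √h • w) - 2 * F q - h * iteratedFDeriv ℝ 2 F q (fun _ ↦ w)|
      ≤ B / 3 * (h ^ 2 * ‖w‖ ^ 4) := by
    simpa [hhom, hpow] using norm_centralDiff_sub_iteratedFDeriv_two_le hF hB q (√h • w)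
  have hhess : |iteratedFDeriv ℝ 2 F q (fun _ ↦ w) - iteratedFDeriv ℝ 2 F p (fun _ ↦ w)|
      ≤ K * h * ‖w‖ ^ 2 := by
    rw [← _root_.sub_apply]
    refine ((iteratedFDeriv ℝ 2 F q - iteratedFDeriv ℝ 2 F p).le_opNorm _).trans ?_
    simpa using mul_le_mul_of_nonneg_right hK (sq_nonneg ‖w‖)
  calc |antitheticQuotient F p u h (√h • w) - (F q - F p) / h
        - 1 / 2 * iteratedFDeriv ℝ 2 F p (fun _ ↦ w)|
      = |(F (q + √h • w) + F (q - √h • w) - 2 * F q - h * iteratedFDeriv ℝ 2 F q (fun _ ↦ w))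
            / (2 * h)
          + (iteratedFDeriv ℝ 2 F q (fun _ ↦ w) - iteratedFDeriv ℝ 2 F p (fun _ ↦ w)) / 2| := by
        unfold antitheticQuotient
        congr 1
        field_simp
        ring
    _ ≤ B / 3 * (h ^ 2 * ‖w‖ ^ 4) / (2 * h) + K * h * ‖w‖ ^ 2 / 2 := by
        refine (abs_add_le _ _).trans ?_
        rw [abs_div, abs_div, abs_two, abs_of_pos (by positivity : 0 < 2 * h)]
        gcongr
    _ = h * (K / 2 * ‖w‖ ^ 2 + B / 6 * ‖w‖ ^ 4) := by
        field_simp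
        ring

variable {E : Type*} [NormedAddCommGroup E] [InnerProductSpace ℝ E] [FiniteDimensional ℝ E]
  [MeasurableSpace E] [BorelSpace E]

theorem exists_abs_variance_antitheticQuotient_sub_le {F : V → ℝ} (hF : ContDiff ℝ 4 F) {B : ℝ}
    (hB : ∀ q, ‖iteratedFDeriv ℝ 4 F q‖ ≤ B) (p u : V) (L : E →L[ℝ] V) {T : E →ₗ[ℝ] E}
    (hT : T.IsSymmetric) (hTF : ∀ z, ⟪z, T z⟫_ℝ = iteratedFDeriv ℝ 2 F p (fun _ ↦ L z)) :
    ∃ C : ℝ, 0 ≤ C ∧ ∀ h : ℝ, 0 < h → h ≤ 1 →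
      |Var[fun z ↦ antitheticQuotient F p u h (√h • L z); stdGaussian E]
          - 1 / 2 * (T ^ 2).trace ℝ E| ≤ C * h := by
  obtain ⟨K, hK⟩ := exists_norm_comp_add_smul_sub_le
    (hF.iteratedFDeriv_right (m := 1) (i := 2) (by norm_num)) p u
  set γ := stdGaussian E
  set Q : E → ℝ := fun z ↦ 1 / 2 * iteratedFDeriv ℝ 2 F p (fun _ ↦ L z)
  set G : E → ℝ := fun z ↦ K / 2 * ‖L z‖ ^ 2 + B / 6 * ‖L z‖ ^ 4
  have hQ : MemLp Q 2 γ :=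
    (memLp_iteratedFDeriv_clm_of_isGaussian γ F 2 p L ENNReal.ofNat_ne_top).const_mul _
  have hG : MemLp G 2 γ :=
    ((memLp_norm_clm_pow_of_isGaussian γ L ENNReal.ofNat_ne_top 2).const_mul _).add
      ((memLp_norm_clm_pow_of_isGaussian γ L ENNReal.ofNat_ne_top 4).const_mul _)
  have hVarQ : Var[Q; γ] = 1 / 2 * (T ^ 2).trace ℝ E := by
    simp only [Q, ← hTF, variance_const_mul, γ, variance_inner_apply_self_stdGaussian hT]
    ring
  refine ⟨Var[Q; γ] + 2 * ∫ z, G z ^ 2 ∂γ, ?_, fun h h0 h1 ↦ ?_⟩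
  · have := variance_nonneg Q γ
    positivity
  set X : E → ℝ := fun z ↦ antitheticQuotient F p u h (√h • L z)
  set c : ℝ := (F (p + h • u) - F p) / h
  have hX : AEStronglyMeasurable X γ := by
    have := continuous_antitheticQuotient hF.continuous p u h
    exact Continuous.aestronglyMeasurable (by fun_prop)
  have hshift : Var[X - fun _ ↦ c; γ] = Var[X; γ] := variance_sub_const hX c
  have hpert := abs_variance_add_sub_variance_le hQ
    ((hX.sub aestronglyMeasurable_const).sub hQ.aestronglyMeasurable) hG h0 h1
    (.of_forall fun z ↦ abs_antitheticQuotient_sqrt_smul_sub_le hF hB h0 (hK h h0.le h1) (L z))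
  rw [← hVarQ, ← hshift, ← add_sub_cancel Q (X - fun _ ↦ c)]
  exact hpert

end Antithetic

section ResidualError

open scoped ENNReal InnerProductSpace

variable {d : ℕ} {v : ℝ → (Fin d → ℝ) → ℝ}

lemma trace_toLpLin {n R : Type*} [Fintype n] [DecidableEq n] [CommRing R] (p : ℝ≥0∞)
    (M : Matrix n n R) : (toLpLin p p M).trace R (WithLp p (n → R)) = M.trace := by
  rw [toLpLin_eq_toLin, trace_toLin_eq]

lemma spatialHess_apply (hv : ContDiff ℝ 2 (Function.uncurry v)) (t : ℝ) (x : Fin d → ℝ)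
    (i j : Fin d) :
    spatialHess v t x i j = fderiv ℝ (fderiv ℝ (Function.uncurry v)) (t, x)
      (0, Pi.single i 1) (0, Pi.single j 1) := by
  have hslice (y : Fin d → ℝ) : HasFDerivAt (fun y : Fin d → ℝ ↦ (t, y))
      (ContinuousLinearMap.inr ℝ ℝ (Fin d → ℝ)) y := hasFDerivAt_prodMk_right t y
  have hF : Differentiable ℝ (Function.uncurry v) := hv.differentiable two_ne_zero
  have hF' : Differentiable ℝ (fderiv ℝ (Function.uncurry v)) :=
    (hv.fderiv_right (m := 1) (by norm_num)).differentiable one_ne_zero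
  have hfirst (y : Fin d → ℝ) : fderiv ℝ (v t) y (Pi.single j 1)
      = fderiv ℝ (Function.uncurry v) (t, y) (0, Pi.single j 1) := by
    have h : fderiv ℝ (v t) y = _ := ((hF (t, y)).hasFDerivAt.comp y (hslice y)).fderiv
    simp [h]
  have hsecond := (((hF' (t, x)).hasFDerivAt.comp x (hslice x)).clm_apply
    (hasFDerivAt_const ((0 : ℝ), (Pi.single j 1 : Fin d → ℝ)) x)).fderiv
  simp only [Function.comp_apply] at hsecond
  simp only [spatialHess, Matrix.of_apply, hfirst, hsecond]
  simp

lemma spatialHess_isHermitian (hv : ContDiff ℝ 2 (Function.uncurry v)) (t : ℝ) (x : Fin d → ℝ) :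
    (spatialHess v t x).IsHermitian := by
  ext i j
  have h : IsSymmSndFDerivAt ℝ (Function.uncurry v) (t, x) :=
    hv.contDiffAt.isSymmSndFDerivAt (by simp)
  simp only [conjTranspose_apply, star_trivial, spatialHess_apply hv]
  exact h _ _

lemma iteratedFDeriv_two_uncurry_eq_dotProduct (hv : ContDiff ℝ 2 (Function.uncurry v)) (t : ℝ)
    (x y : Fin d → ℝ) :
    iteratedFDeriv ℝ 2 (Function.uncurry v) (t, x) (fun _ ↦ (0, y))
      = y ⬝ᵥ spatialHess v t x *ᵥ y := by
  have hy : ((0 : ℝ), y) = ∑ i, y i • ((0 : ℝ), (Pi.single i 1 : Fin d → ℝ)) := by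
    ext1
    · simp [Prod.fst_sum]
    · simpa [Prod.snd_sum] using pi_eq_sum_univ' y
  rw [iteratedFDeriv_two_apply]
  simp only [dotProduct, mulVec, spatialHess_apply hv]
  conv_lhs => rw [hy]
  simp only [map_sum, _root_.sum_apply, map_smul, _root_.smul_apply, smul_eq_mul, Finset.mul_sum]
  rw [Finset.sum_comm]
  refine Finset.sum_congr rfl fun i _ ↦ Finset.sum_congr rfl fun j _ ↦ ?_
  ring

lemma gaussPi_eq_map_stdGaussian (d : ℕ) {s : ℝ} (hs : 0 ≤ s) :
    gaussPi d s = (stdGaussian (EuclideanSpace ℝ (Fin d))).map fun z ↦ √s • z.ofLp := by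
  have hcoord := map_sqrt_mul_gaussianReal s.toNNReal
  rw [Real.coe_toNNReal s hs] at hcoord
  have hpi := Measure.pi_map_pi (μ := fun _ : Fin d ↦ gaussianReal 0 1)
    (f := fun _ y ↦ √s * y) (fun _ ↦ by fun_prop)
  simp only [hcoord] at hpi
  rw [← map_pi_eq_stdGaussian, Measure.map_map (by fun_prop) (by fun_prop)]
  exact hpi.symm

/-- The linear map `z ↦ (0, σ z)` sending a noise vector to the space-time displacement it causes.
Its domain carries the Euclidean norm, since the standard Gaussian measure lives on inner product
spaces. -/
noncomputable def noiseDisplacement (σ : Matrix (Fin d) (Fin d) ℝ) :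
    EuclideanSpace ℝ (Fin d) →L[ℝ] ℝ × (Fin d → ℝ) :=
  .inr ℝ ℝ (Fin d → ℝ) ∘L σ.mulVecLin.toContinuousLinearMap ∘L
    (EuclideanSpace.equiv (Fin d) ℝ : EuclideanSpace ℝ (Fin d) →L[ℝ] Fin d → ℝ)

lemma noiseDisplacement_apply (σ : Matrix (Fin d) (Fin d) ℝ) (z : EuclideanSpace ℝ (Fin d)) :
    noiseDisplacement σ z = (0, σ *ᵥ z.ofLp) := rfl

lemma iteratedFDeriv_two_noiseDisplacement (hv : ContDiff ℝ 2 (Function.uncurry v)) (t : ℝ)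
    (x : Fin d → ℝ) (σ : Matrix (Fin d) (Fin d) ℝ) (z : EuclideanSpace ℝ (Fin d)) :
    iteratedFDeriv ℝ 2 (Function.uncurry v) (t, x) (fun _ ↦ noiseDisplacement σ z)
      = ⟪z, (σᵀ * spatialHess v t x * σ).toEuclideanLin z⟫_ℝ := by
  rw [noiseDisplacement_apply, iteratedFDeriv_two_uncurry_eq_dotProduct hv, toLpLin_apply,
    EuclideanSpace.inner_eq_star_dotProduct, star_trivial, dotProduct_comm _ z.ofLp,
    ← mulVec_mulVec, ← mulVec_mulVec, dotProduct_mulVec z.ofLp, vecMul_transpose]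

lemma resErr_eq_antitheticQuotient_sub (v : ℝ → (Fin d → ℝ) → ℝ) (μv : Fin d → ℝ)
    (σ : Matrix (Fin d) (Fin d) ℝ) (t : ℝ) (x : Fin d → ℝ) (Δt : ℝ) (η : Fin d → ℝ) :
    resErr v μv σ t x Δt η
      = antitheticQuotient (Function.uncurry v) (t, x) (1, μv) Δt (0, σ *ᵥ η)
        - (partialT v t x + 1 / 2 * (σ * σᵀ * spatialHess v t x).trace
          + μv ⬝ᵥ spatialGrad v t x) := by
  simp [resErr, antitheticQuotient]

lemma variance_resErr (hv : Continuous (Function.uncurry v)) (μv : Fin d → ℝ)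
    (σ : Matrix (Fin d) (Fin d) ℝ) (t : ℝ) (x : Fin d → ℝ) {Δt : ℝ} (hΔt : 0 ≤ Δt) :
    Var[resErr v μv σ t x Δt; gaussPi d Δt]
      = Var[fun z ↦ antitheticQuotient (Function.uncurry v) (t, x) (1, μv) Δt
          (√Δt • noiseDisplacement σ z); stdGaussian (EuclideanSpace ℝ (Fin d))] := by
  have : IsProbabilityMeasure (gaussPi d Δt) := by unfold gaussPi; infer_instance
  set A : (Fin d → ℝ) → ℝ := fun η ↦
    antitheticQuotient (Function.uncurry v) (t, x) (1, μv) Δt (0, σ *ᵥ η)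
  have hA : Continuous A :=
    (continuous_antitheticQuotient hv (t, x) (1, μv) Δt).comp (by fun_prop)
  have hscale (z : EuclideanSpace ℝ (Fin d)) :
      √Δt • noiseDisplacement σ z = (0, σ *ᵥ (√Δt • z.ofLp)) := by
    simp [noiseDisplacement_apply, mulVec_smul]
  simp only [funext (resErr_eq_antitheticQuotient_sub v μv σ t x Δt), hscale]
  rw [variance_sub_const hA.aestronglyMeasurable, gaussPi_eq_map_stdGaussian d hΔt,
    variance_map hA.aemeasurable (by fun_prop)]
  rfl

end ResidualError

theorem stmt2_general {d : ℕ} (t : ℝ) (x μv : Fin d → ℝ) (σ : Matrix (Fin d) (Fin d) ℝ)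
    (v : ℝ → (Fin d → ℝ) → ℝ) (hv : ContDiff ℝ 4 (Function.uncurry v)) {B : ℝ}
    (hB : ∀ p : ℝ × (Fin d → ℝ), ‖iteratedFDeriv ℝ 4 (Function.uncurry v) p‖ ≤ B) :
    ∃ C : ℝ, 0 ≤ C ∧ ∀ Δt : ℝ, 0 < Δt → Δt ≤ 1 →
      |variance (resErr v μv σ t x Δt) (gaussPi d Δt)
          - (1 / 2) * (((σᵀ * spatialHess v t x * σ) ^ 2).trace)| ≤ C * Δt := by
  have hv2 : ContDiff ℝ 2 (Function.uncurry v) := hv.of_le (by norm_num)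
  have hM : (σᵀ * spatialHess v t x * σ).IsHermitian := by
    simpa using isHermitian_conjTranspose_mul_mul σ (spatialHess_isHermitian hv2 t x)
  obtain ⟨C, hC0, hC⟩ := exists_abs_variance_antitheticQuotient_sub_le hv hB (t, x) (1, μv)
    (noiseDisplacement σ) (isSymmetric_toEuclideanLin_iff.mpr hM)
    fun z ↦ (iteratedFDeriv_two_noiseDisplacement hv2 t x σ z).symm
  refine ⟨C, hC0, fun Δt h0 h1 ↦ ?_⟩
  rw [variance_resErr hv.continuous μv σ t x h0.le, ← trace_toLpLin 2, toLpLin_pow]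
  exact hC Δt h0 h1

/-- `Var(ε(Δt)) → ½·Tr[(σᵀ∇²v(t,x)σ)²]` as `Δt → 0⁺`, quantitatively: there is `C ≥ 0`
with `|Var(ε(Δt)) − ½·Tr[(σᵀ∇²v(t,x)σ)²]| ≤ C·Δt` for all `Δt ∈ (0,1]`. -/
theorem stmt2 {d : ℕ} (hd : 1 ≤ d) (t : ℝ) (x μv : Fin d → ℝ) (σ : Matrix (Fin d) (Fin d) ℝ)
    (v : ℝ → (Fin d → ℝ) → ℝ) (hv : ContDiff ℝ 4 (Function.uncurry v))
    (hbd : ∀ i : ℕ, i ≤ 4 → ∃ B : ℝ, ∀ p : ℝ × (Fin d → ℝ),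
      ‖iteratedFDeriv ℝ i (Function.uncurry v) p‖ ≤ B) :
    ∃ C : ℝ, 0 ≤ C ∧ ∀ Δt : ℝ, 0 < Δt → Δt ≤ 1 →
      |variance (resErr v μv σ t x Δt) (gaussPi d Δt)
          - (1 / 2) * (((σᵀ * spatialHess v t x * σ) ^ 2).trace)| ≤ C * Δt := by
  obtain ⟨B, hB⟩ := hbd 4 le_rfl
  exact stmt2_general t x μv σ v hv hB
end

section
/- Fix d ∈ ℕ with d ≥ 1 and T > 0, let g(x) = log((1+‖x‖²)/2), and let γ_d be the standard Gaussian measure on ℝ^d. Define u : [0,T] × ℝ^d → ℝ by u(t,x) = −log ∫_{ℝ^d} exp(−g(x + √(2(T−t))·z)) dγ_d(z) = −log ∫_{ℝ^d} 2/(1 + ‖x + √(2(T−t))·z‖²) dγ_d(z). Then u is well defined (the integrand is bounded and positive so the integral is finite and positive), u(T,x) = g(x), and u solves the Hamilton–Jacobi–Bellman equation ∂_t u + Δ_x u = ‖∇_x u‖² on [0,T) × ℝ^d. -/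
open MeasureTheory ProbabilityTheory Matrix

/-- Standard Gaussian probability measure on `ℝ^d` (i.i.d. standard normal coordinates). -/
noncomputable def stdGauss (d : ℕ) : MeasureTheory.Measure (Fin d → ℝ) :=
  MeasureTheory.Measure.pi fun _ => ProbabilityTheory.gaussianReal 0 1

/-- Terminal data `g(x) = log((1+‖x‖²)/2)`. -/
noncomputable def gHJB {d : ℕ} (x : Fin d → ℝ) : ℝ :=
  Real.log ((1 + ∑ i, x i ^ 2) / 2)

/-- Cole–Hopf representation `u(t,x) = −log ∫ exp(−g(x + √(2(T−t))·z)) dγ_d(z)`. -/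
noncomputable def uHJB (d : ℕ) (T : ℝ) (t : ℝ) (x : Fin d → ℝ) : ℝ :=
  -Real.log (∫ z, Real.exp (-(gHJB (x + Real.sqrt (2 * (T - t)) • z))) ∂(stdGauss d))

open scoped NNReal Topology

/-! The Cole–Hopf transformation turns the equation for `u = -log w` into the backward heat equation
`∂ₜ w + Δ w = 0` for `w(t, x) = 𝔼 f(x + r Z)`, where `f = exp (-g) = 2 / (1 + ‖x‖²)`,
`r = √(2(T - t))` and `Z` is standard Gaussian. Differentiating in the scale gives
`∂_r 𝔼 f(x + r Z) = 𝔼 ∇f(x + r Z) · Z`, which is `r Δ 𝔼 f(x + r Z)` by Stein's identity in each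
coordinate, and `r ∂ₜ r = -1`. All derivatives pass under the expectation because `f ∈ C²_b`:
`x ↦ f(x) x` is bounded, and both `∇f = -f · (f x)` and `∇(f x) = f I - (f x) ⊗ (f x)` are
polynomials in `f` and `f x`. -/

section BoundedC1

variable {E F G : Type*} [NormedAddCommGroup E] [NormedSpace ℝ E] [NormedAddCommGroup F]
  [NormedSpace ℝ F] [NormedAddCommGroup G] [NormedSpace ℝ G] {f : E → F}

/-- The class `C¹_b` of bounded `C¹` maps with bounded derivative. The class `C²_b` is expressed
by requiring this of both `f` and `fderiv ℝ f`. -/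
structure IsBoundedC1 (f : E → F) : Prop where
  contDiff : ContDiff ℝ 1 f
  bounded : ∃ B, ∀ x, ‖f x‖ ≤ B
  bounded_fderiv : ∃ C, ∀ x, ‖fderiv ℝ f x‖ ≤ C

namespace IsBoundedC1

lemma continuous (hf : IsBoundedC1 f) : Continuous f := hf.contDiff.continuous

lemma differentiable (hf : IsBoundedC1 f) : Differentiable ℝ f :=
  hf.contDiff.differentiable one_ne_zero

lemma continuous_fderiv (hf : IsBoundedC1 f) : Continuous (fderiv ℝ f) :=
  hf.contDiff.continuous_fderiv one_ne_zero

lemma smul {c : E → ℝ} (hc : IsBoundedC1 c) (hf : IsBoundedC1 f) :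
    IsBoundedC1 fun x => c x • f x := by
  obtain ⟨A, hA⟩ := hc.bounded
  obtain ⟨A', hA'⟩ := hc.bounded_fderiv
  obtain ⟨B, hB⟩ := hf.bounded
  obtain ⟨B', hB'⟩ := hf.bounded_fderiv
  have hA_nonneg : 0 ≤ A := (norm_nonneg _).trans (hA 0)
  have hA'_nonneg : 0 ≤ A' := (norm_nonneg _).trans (hA' 0)
  refine ⟨hc.contDiff.smul hf.contDiff, ⟨A * B, fun x => ?_⟩, ⟨A * B' + A' * B, fun x => ?_⟩⟩
  · rw [norm_smul]
    gcongr
    exacts [hA x, hB x]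
  · rw [fderiv_fun_smul (hc.differentiable x) (hf.differentiable x)]
    refine norm_add_le_of_le ?_ ?_
    · rw [norm_smul]
      gcongr
      exacts [hA x, hB' x]
    · rw [ContinuousLinearMap.norm_smulRight_apply]
      gcongr
      exacts [hA' x, hB x]

lemma clm_comp (L : F →L[ℝ] G) (hf : IsBoundedC1 f) : IsBoundedC1 fun x => L (f x) := by
  obtain ⟨B, hB⟩ := hf.bounded
  obtain ⟨C, hC⟩ := hf.bounded_fderiv
  refine ⟨L.contDiff.comp hf.contDiff, ⟨‖L‖ * B, fun x => L.le_opNorm_of_le (hB x)⟩,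
    ⟨‖L‖ * C, fun x => ?_⟩⟩
  have hderiv : fderiv ℝ (fun x => L (f x)) x = L.comp (fderiv ℝ f x) :=
    (L.hasFDerivAt.comp x (hf.differentiable x).hasFDerivAt).fderiv
  rw [hderiv]
  exact (L.opNorm_comp_le _).trans (by gcongr; exact hC x)

lemma hasFDerivAt_comp_affine (hf : IsBoundedC1 f) (c : E) (A : G →L[ℝ] E) (z : G) :
    HasFDerivAt (fun z => f (c + A z)) ((fderiv ℝ f (c + A z)).comp A) z :=
  (hf.differentiable _).hasFDerivAt.comp z (A.hasFDerivAt.const_add c)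

lemma comp_affine (hf : IsBoundedC1 f) (c : E) (A : G →L[ℝ] E) :
    IsBoundedC1 fun z => f (c + A z) := by
  obtain ⟨B, hB⟩ := hf.bounded
  obtain ⟨C, hC⟩ := hf.bounded_fderiv
  refine ⟨hf.contDiff.comp (contDiff_const.add A.contDiff), ⟨B, fun _ => hB _⟩,
    ⟨C * ‖A‖, fun z => ?_⟩⟩
  rw [(hf.hasFDerivAt_comp_affine c A z).fderiv]
  exact (ContinuousLinearMap.opNorm_comp_le _ _).trans (by gcongr; exact hC _)

lemma hasFDerivAt_comp_add_smul (hf : IsBoundedC1 f) (r : ℝ) (x z : E) :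
    HasFDerivAt (fun z => f (x + r • z)) (r • fderiv ℝ f (x + r • z)) z := by
  simpa using hf.hasFDerivAt_comp_affine x (r • ContinuousLinearMap.id ℝ E) z

lemma comp_add_smul (hf : IsBoundedC1 f) (r : ℝ) (x : E) : IsBoundedC1 fun z => f (x + r • z) := by
  simpa using hf.comp_affine x (r • ContinuousLinearMap.id ℝ E)

variable [SecondCountableTopology E] [MeasurableSpace E] [OpensMeasurableSpace E]
  {μ : Measure E}

lemma integrable_smul {ξ : E → ℝ} (hξ : Integrable ξ μ) (hf : IsBoundedC1 f) :
    Integrable (fun z => ξ z • f z) μ := by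
  obtain ⟨B, hB⟩ := hf.bounded
  exact hξ.smul_bdd B hf.continuous.aestronglyMeasurable (.of_forall hB)

variable [IsFiniteMeasure μ]

lemma integrable (hf : IsBoundedC1 f) : Integrable f μ := by
  obtain ⟨B, hB⟩ := hf.bounded
  exact .of_bound hf.continuous.aestronglyMeasurable B (.of_forall hB)

lemma integrable_fderiv (hf : IsBoundedC1 f) : Integrable (fderiv ℝ f) μ := by
  obtain ⟨C, hC⟩ := hf.bounded_fderiv
  exact .of_bound hf.continuous_fderiv.aestronglyMeasurable C (.of_forall hC)

lemma integrable_fderiv_comp_add_smul (hf : IsBoundedC1 f) (r : ℝ) (x : E) :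
    Integrable (fun z => fderiv ℝ f (x + r • z)) μ := by
  obtain ⟨C, hC⟩ := hf.bounded_fderiv
  exact .of_bound (hf.continuous_fderiv.comp (by fun_prop)).aestronglyMeasurable C
    (.of_forall fun _ => hC _)

end IsBoundedC1

end BoundedC1

section DilatedAverage

variable {E F : Type*} [NormedAddCommGroup E] [NormedSpace ℝ E] [MeasurableSpace E]
  [NormedAddCommGroup F] [NormedSpace ℝ F]

/-- The average of `f` around `x` against the dilation of `μ` by `r`. For `μ` standard Gaussian
and `r = √(2τ)` this is the heat semigroup `exp(τΔ) f`. -/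
noncomputable def dilatedAverage (μ : Measure E) (f : E → F) (r : ℝ) (x : E) : F :=
  ∫ z, f (x + r • z) ∂μ

variable [SecondCountableTopology E] [OpensMeasurableSpace E] {μ : Measure E} [IsFiniteMeasure μ]

lemma dilatedAverage_pos [NeZero μ] {f : E → ℝ} (hf : IsBoundedC1 f) (hpos : ∀ x, 0 < f x)
    (r : ℝ) (x : E) : 0 < dilatedAverage μ f r x := by
  rw [dilatedAverage, integral_pos_iff_support_of_nonneg (fun z => (hpos _).le)
    (hf.comp_add_smul r x).integrable, Function.support_eq_univ fun z => (hpos _).ne']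
  exact Measure.measure_univ_pos.2 (NeZero.ne μ)

namespace IsBoundedC1

variable {f : E → F}

theorem hasFDerivAt_dilatedAverage (hf : IsBoundedC1 f) (r : ℝ) (x : E) :
    HasFDerivAt (dilatedAverage μ f r) (dilatedAverage μ (fderiv ℝ f) r x) x := by
  obtain ⟨C, hC⟩ := hf.bounded_fderiv
  have hmeas : Continuous fun z => fderiv ℝ f (x + r • z) :=
    hf.continuous_fderiv.comp (by fun_prop)
  exact hasFDerivAt_integral_of_dominated_of_fderiv_le (bound := fun _ => C)
    (F' := fun y z => fderiv ℝ f (y + r • z)) Filter.univ_mem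
    (.of_forall fun y => (hf.comp_add_smul r y).continuous.aestronglyMeasurable)
    (hf.comp_add_smul r x).integrable hmeas.aestronglyMeasurable
    (.of_forall fun _ _ _ => hC _) (integrable_const C)
    (.of_forall fun z _ _ => (hasFDerivAt_comp_add_right (r • z)).2
      (hf.differentiable _).hasFDerivAt)

lemma fderiv_dilatedAverage (hf : IsBoundedC1 f) (r : ℝ) :
    fderiv ℝ (dilatedAverage μ f r) = dilatedAverage μ (fderiv ℝ f) r :=
  funext fun x => (hf.hasFDerivAt_dilatedAverage r x).fderiv

lemma fderiv_dilatedAverage_apply (hf : IsBoundedC1 f) (r : ℝ) (x y : E) :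
    fderiv ℝ (dilatedAverage μ f r) x y = ∫ z, fderiv ℝ f (x + r • z) y ∂μ := by
  rw [hf.fderiv_dilatedAverage, dilatedAverage,
    ContinuousLinearMap.integral_apply (hf.integrable_fderiv_comp_add_smul r x)]

theorem hasDerivAt_dilatedAverage_scale (hf : IsBoundedC1 f) (hμ : Integrable id μ)
    (r : ℝ) (x : E) :
    HasDerivAt (fun s => dilatedAverage μ f s x) (∫ z, fderiv ℝ f (x + r • z) z ∂μ) r := by
  obtain ⟨C, hC⟩ := hf.bounded_fderiv
  have hmeas : Continuous fun z => fderiv ℝ f (x + r • z) z :=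
    (hf.continuous_fderiv.comp (by fun_prop)).clm_apply continuous_id
  have hline : ∀ (s : ℝ) (z : E), HasDerivAt (fun s : ℝ => x + s • z) z s := fun s z => by
    simpa using ((hasDerivAt_id s).smul_const z).const_add x
  exact (hasDerivAt_integral_of_dominated_loc_of_deriv_le (bound := fun z => C * ‖z‖)
    (F' := fun s z => fderiv ℝ f (x + s • z) z) Filter.univ_mem
    (.of_forall fun s => (hf.comp_add_smul s x).continuous.aestronglyMeasurable)
    (hf.comp_add_smul r x).integrable hmeas.aestronglyMeasurable
    (.of_forall fun z s _ => (fderiv ℝ f (x + s • z)).le_of_opNorm_le (hC _) z)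
    (hμ.norm.const_mul C)
    (.of_forall fun z s _ => (hf.differentiable _).hasFDerivAt.comp_hasDerivAt s (hline s z))).2

end IsBoundedC1

end DilatedAverage

section GaussianIntegrationByParts

variable {F : Type*} [NormedAddCommGroup F] [NormedSpace ℝ F]

lemma hasDerivAt_gaussianPDFReal (m : ℝ) (v : ℝ≥0) (x : ℝ) :
    HasDerivAt (gaussianPDFReal m v) (-((x - m) / v) * gaussianPDFReal m v x) x := by
  have hexponent : HasDerivAt (fun y => -(y - m) ^ 2 / (2 * (v : ℝ))) (-((x - m) / v)) x := by
    refine ((((hasDerivAt_id x).sub_const m).pow 2).neg.div_const (2 * (v : ℝ))).congr_deriv ?_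
    simp only [id]
    ring
  rw [gaussianPDFReal_def]
  exact (hexponent.exp.const_mul _).congr_deriv (by ring)

lemma integrable_gaussianReal_iff_integrable_smul {m : ℝ} {v : ℝ≥0} (hv : v ≠ 0) {φ : ℝ → F} :
    Integrable φ (gaussianReal m v) ↔ Integrable fun x => gaussianPDFReal m v x • φ x := by
  rw [gaussianReal_of_var_ne_zero m hv, integrable_withDensity_iff_integrable_smul'
    (measurable_gaussianPDF m v) (.of_forall fun _ => gaussianPDF_lt_top)]
  simp only [toReal_gaussianPDF]

theorem integral_sub_mean_smul_gaussianReal {m : ℝ} {v : ℝ≥0} {φ φ' : ℝ → F}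
    (hφ : ∀ x, HasDerivAt φ (φ' x) x) (hint : Integrable φ (gaussianReal m v))
    (hint_smul : Integrable (fun x => (x - m) • φ x) (gaussianReal m v))
    (hint' : Integrable φ' (gaussianReal m v)) :
    ∫ x, (x - m) • φ x ∂(gaussianReal m v) = v • ∫ x, φ' x ∂(gaussianReal m v) := by
  obtain rfl | hv := eq_or_ne v 0
  · rw [gaussianReal_zero_var, zero_smul]
    exact integral_eq_zero_of_ae (by simp [ae_dirac_eq, Filter.EventuallyEq])
  have hscore : ∀ x, (-((x - m) / v) * gaussianPDFReal m v x) • φ x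
      = -(v : ℝ)⁻¹ • gaussianPDFReal m v x • (x - m) • φ x := fun x => by
    simp only [smul_smul]
    congr 1
    ring
  rw [integrable_gaussianReal_iff_integrable_smul hv] at hint hint_smul hint'
  have hparts := integral_bilinear_hasDerivAt_right_eq_neg_left_of_integrable
    (L := ContinuousLinearMap.lsmul ℝ ℝ) (u := gaussianPDFReal m v)
    (fun x _ => hasDerivAt_gaussianPDFReal m v x) (fun x _ => hφ x) hint'
    ((hint_smul.smul (-(v : ℝ)⁻¹)).congr (.of_forall fun x => (hscore x).symm)) hint
  simp only [ContinuousLinearMap.lsmul_apply, hscore, neg_smul, integral_neg,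
    integral_smul, neg_neg] at hparts
  rw [integral_gaussianReal_eq_integral_smul hv, integral_gaussianReal_eq_integral_smul hv, hparts,
    NNReal.smul_def, smul_inv_smul₀ (NNReal.coe_ne_zero.2 hv)]

lemma integral_pi_eq_integral_insertNth {n : ℕ} {X : Fin (n + 1) → Type*}
    [∀ i, MeasurableSpace (X i)] (μ : ∀ i, Measure (X i)) [∀ i, SigmaFinite (μ i)]
    (i : Fin (n + 1)) {h : (∀ i, X i) → F} (hh : Integrable h (Measure.pi μ)) :
    ∫ z, h z ∂(Measure.pi μ)
      = ∫ y, ∫ a, h (i.insertNth a y) ∂(μ i) ∂(Measure.pi fun j => μ (i.succAbove j)) := by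
  have hpres := (measurePreserving_piFinSuccAbove μ i).symm
  have hint : Integrable (fun p : X i × (∀ j, X (i.succAbove j)) => h (i.insertNth p.1 p.2))
      ((μ i).prod (Measure.pi fun j => μ (i.succAbove j))) :=
    hpres.integrable_comp_of_integrable hh
  rw [← integral_prod_symm _ hint]
  exact (hpres.integral_comp' h).symm

instance (d : ℕ) : IsProbabilityMeasure (stdGauss d) := by
  unfold stdGauss
  infer_instance

lemma integrable_id_gaussianReal (m : ℝ) (v : ℝ≥0) : Integrable id (gaussianReal m v) :=
  memLp_one_iff_integrable.1 (memLp_id_gaussianReal 1)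

lemma integrable_eval_stdGauss {d : ℕ} (i : Fin d) :
    Integrable (fun z : Fin d → ℝ => z i) (stdGauss d) :=
  (measurePreserving_eval (fun _ : Fin d => gaussianReal 0 1) i).integrable_comp_of_integrable
    (integrable_id_gaussianReal 0 1)

lemma integrable_id_stdGauss (d : ℕ) : Integrable id (stdGauss d) :=
  Integrable.of_eval integrable_eval_stdGauss

lemma insertNth_eq_add_toSpanSingleton {n : ℕ} (i : Fin (n + 1)) (a : ℝ) (y : Fin n → ℝ) :
    (i.insertNth a y : Fin (n + 1) → ℝ)
      = i.insertNth 0 y + ContinuousLinearMap.toSpanSingleton ℝ (Pi.single i 1) a := by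
  ext j
  cases j using i.succAboveCases <;> simp

namespace IsBoundedC1

variable {d : ℕ}

theorem integral_eval_smul_stdGauss {h : (Fin d → ℝ) → F} (hh : IsBoundedC1 h) (i : Fin d) :
    ∫ z, z i • h z ∂(stdGauss d) = ∫ z, fderiv ℝ h z (Pi.single i 1) ∂(stdGauss d) := by
  obtain _ | n := d
  · exact i.elim0
  rw [stdGauss,
    integral_pi_eq_integral_insertNth _ i (hh.integrable_smul (integrable_eval_stdGauss i)),
    integral_pi_eq_integral_insertNth _ i (hh.integrable_fderiv.apply_continuousLinearMap _)]
  refine integral_congr_ae (.of_forall fun y => ?_)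
  obtain ⟨c, A, hA, hc⟩ : ∃ (c : Fin (n + 1) → ℝ) (A : ℝ →L[ℝ] Fin (n + 1) → ℝ),
      A 1 = Pi.single i 1 ∧ ∀ a, i.insertNth a y = c + A a :=
    ⟨_, _, ContinuousLinearMap.toSpanSingleton_apply_one ..,
      fun a => insertNth_eq_add_toSpanSingleton i a y⟩
  have hcoord : ∀ a, (c + A a) i = a := fun a => by rw [← hc, Fin.insertNth_apply_same]
  have hline := hh.comp_affine c A
  have hderiv : ∀ a, deriv (fun a => h (c + A a)) a = fderiv ℝ h (c + A a) (Pi.single i 1) :=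
    fun a => hA ▸ (hh.hasFDerivAt_comp_affine c A a).hasDerivAt.deriv
  have hstein := integral_sub_mean_smul_gaussianReal (m := 0) (v := 1)
    (fun a => (hline.differentiable a).hasDerivAt) hline.integrable
    (hline.integrable_smul (by simpa using! integrable_id_gaussianReal 0 1))
    (hline.integrable_fderiv.apply_continuousLinearMap 1)
  simpa only [hc, hcoord, hderiv, sub_zero, one_smul] using hstein

theorem integral_apply_self_stdGauss {G : (Fin d → ℝ) → (Fin d → ℝ) →L[ℝ] F}
    (hG : IsBoundedC1 G) :
    ∫ z, G z z ∂(stdGauss d)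
      = ∑ i, ∫ z, fderiv ℝ G z (Pi.single i 1) (Pi.single i 1) ∂(stdGauss d) := by
  have hcol : ∀ i, IsBoundedC1 fun z => G z (Pi.single i 1) := fun i =>
    hG.clm_comp (ContinuousLinearMap.apply ℝ F (Pi.single i 1))
  have hcol_deriv : ∀ (i) (z : Fin d → ℝ), fderiv ℝ (fun z => G z (Pi.single i 1)) z (Pi.single i 1)
      = fderiv ℝ G z (Pi.single i 1) (Pi.single i 1) := fun i z => by
    rw [fderiv_clm_apply (hG.differentiable z) (differentiableAt_const _)]
    simp
  calc ∫ z, G z z ∂(stdGauss d)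
      = ∫ z, ∑ i, z i • G z (Pi.single i 1) ∂(stdGauss d) := by
        refine integral_congr_ae (.of_forall fun z => ?_)
        simpa only [map_sum, map_smul] using congrArg (G z) (pi_eq_sum_univ' z)
    _ = ∑ i, ∫ z, z i • G z (Pi.single i 1) ∂(stdGauss d) :=
        integral_finsetSum _ fun i _ => (hcol i).integrable_smul (integrable_eval_stdGauss i)
    _ = ∑ i, ∫ z, fderiv ℝ G z (Pi.single i 1) (Pi.single i 1) ∂(stdGauss d) := by
        simp only [(hcol _).integral_eval_smul_stdGauss, hcol_deriv]

end IsBoundedC1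

end GaussianIntegrationByParts

section HeatEquation

variable {F : Type*} [NormedAddCommGroup F] [NormedSpace ℝ F] {d : ℕ}

/-- The Laplacian on `ℝ^d`, in coordinates: Mathlib's `Laplacian` asks for an inner product space,
which `Fin d → ℝ` with its supremum norm is not. -/
noncomputable def coordLaplacian (f : (Fin d → ℝ) → F) (x : Fin d → ℝ) : F :=
  ∑ i, fderiv ℝ (fderiv ℝ f) x (Pi.single i 1) (Pi.single i 1)

lemma sum_spatialHess_eq_coordLaplacian {v : ℝ → (Fin d → ℝ) → ℝ} {t : ℝ} {x : Fin d → ℝ}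
    (h : DifferentiableAt ℝ (fderiv ℝ (v t)) x) :
    ∑ i, spatialHess v t x i i = coordLaplacian (v t) x := by
  refine Finset.sum_congr rfl fun i _ => ?_
  rw [spatialHess, Matrix.of_apply, fderiv_clm_apply h (differentiableAt_const _)]
  simp

namespace IsBoundedC1

variable {f : (Fin d → ℝ) → F}

theorem hasDerivAt_dilatedAverage_stdGauss (hf : IsBoundedC1 f) (hf' : IsBoundedC1 (fderiv ℝ f))
    (r : ℝ) (x : Fin d → ℝ) :
    HasDerivAt (fun s => dilatedAverage (stdGauss d) f s x)
      (r • coordLaplacian (dilatedAverage (stdGauss d) f r) x) r := by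
  refine (hf.hasDerivAt_dilatedAverage_scale (integrable_id_stdGauss d) r x).congr_deriv ?_
  rw [(hf'.comp_add_smul r x).integral_apply_self_stdGauss, coordLaplacian, Finset.smul_sum,
    hf.fderiv_dilatedAverage]
  refine Finset.sum_congr rfl fun i _ => ?_
  have hint := (hf'.integrable_fderiv_comp_add_smul (μ := stdGauss d) r x)
  rw [hf'.fderiv_dilatedAverage_apply, ContinuousLinearMap.integral_apply
    (hint.apply_continuousLinearMap _), ← integral_smul]
  simp only [(hf'.hasFDerivAt_comp_add_smul r x _).fderiv, _root_.smul_apply]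

theorem hasDerivAt_dilatedAverage_stdGauss_sqrt (hf : IsBoundedC1 f)
    (hf' : IsBoundedC1 (fderiv ℝ f)) {t T : ℝ} (ht : t < T) (x : Fin d → ℝ) :
    HasDerivAt (fun s => dilatedAverage (stdGauss d) f √(2 * (T - s)) x)
      (-coordLaplacian (dilatedAverage (stdGauss d) f √(2 * (T - t))) x) t := by
  have hpos : 0 < 2 * (T - t) := by linarith
  have hsqrt : HasDerivAt (fun s => √(2 * (T - s))) (-(√(2 * (T - t)))⁻¹) t := by
    refine ((((hasDerivAt_id t).const_sub T).const_mul 2).sqrt hpos.ne').congr_deriv ?_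
    simp only [id]
    field_simp
  refine ((hf.hasDerivAt_dilatedAverage_stdGauss hf' _ x).scomp t hsqrt).congr_deriv ?_
  rw [neg_smul, inv_smul_smul₀ (Real.sqrt_pos.2 hpos).ne']

end IsBoundedC1

end HeatEquation

section ColeHopf

lemma hasFDerivAt_fderiv_neg_log {E : Type*} [NormedAddCommGroup E] [NormedSpace ℝ E] {w : E → ℝ}
    {x : E} (hw : ∀ᶠ y in 𝓝 x, DifferentiableAt ℝ w y)
    (hw' : DifferentiableAt ℝ (fderiv ℝ w) x) (hx : w x ≠ 0) :
    HasFDerivAt (fderiv ℝ fun y => -Real.log (w y))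
      (-(w x)⁻¹ • fderiv ℝ (fderiv ℝ w) x + (fderiv ℝ (fun y => -Real.log (w y)) x).smulRight
        (fderiv ℝ (fun y => -Real.log (w y)) x)) x := by
  have hgrad : ∀ᶠ y in 𝓝 x, fderiv ℝ (fun y => -Real.log (w y)) y = -(w y)⁻¹ • fderiv ℝ w y := by
    filter_upwards [hw, hw.self_of_nhds.continuousAt.eventually_ne hx] with y hy hy0
    rw [neg_smul]
    exact (hy.hasFDerivAt.log hy0).fun_neg.fderiv
  have hinv := ((hasDerivAt_inv hx).comp_hasFDerivAt x hw.self_of_nhds.hasFDerivAt).fun_neg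
  refine ((hinv.smul hw'.hasFDerivAt).congr_of_eventuallyEq hgrad).congr_fderiv ?_
  rw [hgrad.self_of_nhds]
  ext a b
  simp only [Function.comp_apply, neg_smul, neg_neg, _root_.add_apply, _root_.neg_apply,
    _root_.smul_apply, ContinuousLinearMap.smulRight_apply, smul_eq_mul, smul_neg, add_right_inj]
  ring

variable {d : ℕ} {v : ℝ → (Fin d → ℝ) → ℝ} {t : ℝ} {x : Fin d → ℝ}

theorem hjb_neg_log_of_heat (hx : v t x ≠ 0)
    (hspace : ∀ᶠ y in 𝓝 x, DifferentiableAt ℝ (v t) y)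
    (hspace' : DifferentiableAt ℝ (fderiv ℝ (v t)) x)
    (hheat : HasDerivAt (fun s => v s x) (-coordLaplacian (v t) x) t) :
    partialT (fun s y => -Real.log (v s y)) t x
        + ∑ i, spatialHess (fun s y => -Real.log (v s y)) t x i i
      = ∑ i, spatialGrad (fun s y => -Real.log (v s y)) t x i ^ 2 := by
  have hhess := hasFDerivAt_fderiv_neg_log hspace hspace' hx
  have htime : partialT (fun s y => -Real.log (v s y)) t x = coordLaplacian (v t) x / v t x := by
    rw [partialT, (hheat.log hx).fun_neg.deriv, neg_div, neg_neg]
  have hlap : coordLaplacian (fun y => -Real.log (v t y)) x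
      = -(coordLaplacian (v t) x / v t x)
        + ∑ i, spatialGrad (fun s y => -Real.log (v s y)) t x i ^ 2 := by
    simp only [coordLaplacian, spatialGrad, hhess.fderiv]
    simp [Finset.sum_add_distrib, ← Finset.mul_sum, div_eq_inv_mul, sq]
  rw [sum_spatialHess_eq_coordLaplacian hhess.differentiableAt, htime, hlap, add_neg_cancel_left]

end ColeHopf

section InverseQuadratic

variable {E : Type*} [NormedAddCommGroup E] [NormedSpace ℝ E] {B : E →L[ℝ] E →L[ℝ] ℝ}

/-- The function `2 / (1 + B(x, x))`, which is `exp (-g)` for the terminal data `g` when `B` is the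
dot product. -/
noncomputable def inverseQuadratic (B : E →L[ℝ] E →L[ℝ] ℝ) (x : E) : ℝ := 2 / (1 + B x x)

lemma apply_self_nonneg_of_isCoercive (hB : IsCoercive B) (x : E) : 0 ≤ B x x := by
  obtain ⟨C, hC, hCB⟩ := hB
  exact le_trans (by positivity) (hCB x)

lemma inverseQuadratic_pos (hB : IsCoercive B) (x : E) : 0 < inverseQuadratic B x :=
  div_pos two_pos (add_pos_of_pos_of_nonneg one_pos (apply_self_nonneg_of_isCoercive hB x))

lemma norm_inverseQuadratic_le (hB : IsCoercive B) (x : E) : ‖inverseQuadratic B x‖ ≤ 2 := by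
  rw [Real.norm_of_nonneg (inverseQuadratic_pos hB x).le]
  exact div_le_self two_pos.le (le_add_of_nonneg_right (apply_self_nonneg_of_isCoercive hB x))

lemma exists_norm_inverseQuadratic_smul_self_le (hB : IsCoercive B) :
    ∃ K, ∀ x, ‖inverseQuadratic B x • x‖ ≤ K := by
  obtain ⟨C, hC, hCB⟩ := id hB
  refine ⟨1 + C⁻¹, fun x => ?_⟩
  have hBx := apply_self_nonneg_of_isCoercive hB x
  rw [norm_smul, Real.norm_of_nonneg (inverseQuadratic_pos hB x).le, inverseQuadratic,
    div_mul_eq_mul_div, div_le_iff₀ (by positivity)]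
  calc 2 * ‖x‖ ≤ 1 + ‖x‖ * ‖x‖ := by nlinarith [sq_nonneg (‖x‖ - 1)]
    _ ≤ 1 + C⁻¹ * B x x := by
        rw [add_le_add_iff_left, le_inv_mul_iff₀ hC, ← mul_assoc]
        exact hCB x
    _ ≤ (1 + C⁻¹) * (1 + B x x) := by nlinarith [inv_pos.2 hC]

lemma hasFDerivAt_inverseQuadratic (hB : IsCoercive B) (hsymm : ∀ x y, B x y = B y x) (x : E) :
    HasFDerivAt (inverseQuadratic B)
      (inverseQuadratic B x • (-B) (inverseQuadratic B x • x)) x := by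
  have hne : 1 + B x x ≠ 0 :=
    (add_pos_of_pos_of_nonneg one_pos (apply_self_nonneg_of_isCoercive hB x)).ne'
  have hden : HasFDerivAt (fun x => 1 + B x x) ((2 : ℝ) • B x) x := by
    refine ((B.hasFDerivAt.clm_apply (hasFDerivAt_id x)).const_add 1).congr_fderiv ?_
    ext y
    simp [hsymm y x, two_mul]
  refine (((hasDerivAt_inv hne).comp_hasFDerivAt x hden).const_mul 2).congr_fderiv ?_
  ext y
  simp only [neg_smul, smul_neg, _root_.neg_apply, _root_.smul_apply, smul_eq_mul,
    inverseQuadratic, map_smul, neg_inj]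
  field_simp

lemma hasFDerivAt_inverseQuadratic_smul_self (hB : IsCoercive B) (hsymm : ∀ x y, B x y = B y x)
    (x : E) :
    HasFDerivAt (fun x => inverseQuadratic B x • x)
      (inverseQuadratic B x • ContinuousLinearMap.id ℝ E
        + ((-B) (inverseQuadratic B x • x)).smulRight (inverseQuadratic B x • x)) x := by
  refine ((hasFDerivAt_inverseQuadratic hB hsymm x).smul (hasFDerivAt_id x)).congr_fderiv ?_
  rw [id, add_right_inj]
  ext y
  simp [smul_smul, mul_comm, mul_assoc]

lemma contDiff_inverseQuadratic (hB : IsCoercive B) {n : WithTop ℕ∞} :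
    ContDiff ℝ n (inverseQuadratic B) :=
  contDiff_const.div (contDiff_const.add (B.contDiff.clm_apply contDiff_id)) fun x =>
    (add_pos_of_pos_of_nonneg one_pos (apply_self_nonneg_of_isCoercive hB x)).ne'

lemma isBoundedC1_inverseQuadratic (hB : IsCoercive B) (hsymm : ∀ x y, B x y = B y x) :
    IsBoundedC1 (inverseQuadratic B) := by
  obtain ⟨K, hK⟩ := exists_norm_inverseQuadratic_smul_self_le hB
  refine ⟨contDiff_inverseQuadratic hB, ⟨2, norm_inverseQuadratic_le hB⟩,
    ⟨2 * (‖-B‖ * K), fun x => ?_⟩⟩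
  rw [(hasFDerivAt_inverseQuadratic hB hsymm x).fderiv, norm_smul]
  gcongr
  exacts [norm_inverseQuadratic_le hB x, (-B).le_opNorm_of_le (hK x)]

lemma isBoundedC1_inverseQuadratic_smul_self (hB : IsCoercive B)
    (hsymm : ∀ x y, B x y = B y x) : IsBoundedC1 fun x => inverseQuadratic B x • x := by
  obtain ⟨K, hK⟩ := exists_norm_inverseQuadratic_smul_self_le hB
  have hK_nonneg : 0 ≤ K := (norm_nonneg _).trans (hK 0)
  refine ⟨(contDiff_inverseQuadratic hB).smul contDiff_id, ⟨K, hK⟩,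
    ⟨2 * 1 + ‖-B‖ * K * K, fun x => ?_⟩⟩
  rw [(hasFDerivAt_inverseQuadratic_smul_self hB hsymm x).fderiv]
  refine norm_add_le_of_le ?_ ?_
  · rw [norm_smul]
    gcongr
    exacts [norm_inverseQuadratic_le hB x, ContinuousLinearMap.norm_id_le]
  · rw [ContinuousLinearMap.norm_smulRight_apply]
    gcongr
    exacts [(-B).le_opNorm_of_le (hK x), hK x]

lemma isBoundedC1_fderiv_inverseQuadratic (hB : IsCoercive B) (hsymm : ∀ x y, B x y = B y x) :
    IsBoundedC1 (fderiv ℝ (inverseQuadratic B)) := by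
  rw [funext fun x => (hasFDerivAt_inverseQuadratic hB hsymm x).fderiv]
  exact (isBoundedC1_inverseQuadratic hB hsymm).smul
    ((isBoundedC1_inverseQuadratic_smul_self hB hsymm).clm_comp (-B))

end InverseQuadratic

section TerminalData

variable {d : ℕ}

/-- The dot product of `ℝ^d` as a continuous bilinear form, the `B` of `inverseQuadratic` for which
`1 + B(x, x) = 1 + ‖x‖²` in the Euclidean norm. -/
noncomputable def dotProductCLM (d : ℕ) : (Fin d → ℝ) →L[ℝ] (Fin d → ℝ) →L[ℝ] ℝ :=
  ∑ i, (ContinuousLinearMap.proj i).smulRight (ContinuousLinearMap.proj i)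

lemma dotProductCLM_apply (x y : Fin d → ℝ) : dotProductCLM d x y = ∑ i, x i * y i := by
  simp [dotProductCLM]

lemma dotProductCLM_comm (x y : Fin d → ℝ) : dotProductCLM d x y = dotProductCLM d y x := by
  simp only [dotProductCLM_apply, mul_comm]

lemma isCoercive_dotProductCLM : IsCoercive (dotProductCLM d) := by
  refine ⟨1, one_pos, fun x => ?_⟩
  have hcoord : ‖x‖ ≤ √(dotProductCLM d x x) := by
    refine (pi_norm_le_iff_of_nonneg (Real.sqrt_nonneg _)).2 fun i => Real.abs_le_sqrt ?_
    rw [dotProductCLM_apply, sq]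
    exact Finset.single_le_sum (f := fun i => x i * x i) (fun i _ => mul_self_nonneg (x i))
      (Finset.mem_univ i)
  rw [one_mul, ← sq]
  refine (Real.le_sqrt (norm_nonneg x) ?_).1 hcoord
  rw [dotProductCLM_apply]
  exact Finset.sum_nonneg fun i _ => mul_self_nonneg (x i)

lemma exp_neg_gHJB (x : Fin d → ℝ) :
    Real.exp (-gHJB x) = inverseQuadratic (dotProductCLM d) x := by
  simp only [gHJB, inverseQuadratic, dotProductCLM_apply, ← sq]
  rw [← Real.log_inv, Real.exp_log (by positivity), inv_div]

lemma uHJB_eq_neg_log_dilatedAverage (T : ℝ) :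
    uHJB d T = fun t x => -Real.log
      (dilatedAverage (stdGauss d) (inverseQuadratic (dotProductCLM d)) √(2 * (T - t)) x) := by
  simp only [dilatedAverage, ← exp_neg_gHJB]
  rfl

end TerminalData

/-- The Cole–Hopf representation is well defined (the integrand, which equals
`2/(1+‖x+√(2(T−t))z‖²)`, is bounded, positive, integrable, and has positive integral),
satisfies the terminal condition `u(T,x) = g(x)`, and solves the HJB equation
`∂_t u + Δ_x u = ‖∇_x u‖²` on `[0,T) × ℝ^d`. -/
theorem stmt10 {d : ℕ} (hd : 1 ≤ d) (T : ℝ) (hT : 0 < T) :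
    (∀ (t : ℝ) (x : Fin d → ℝ),
      MeasureTheory.Integrable
        (fun z => Real.exp (-(gHJB (x + Real.sqrt (2 * (T - t)) • z)))) (stdGauss d) ∧
      (∀ z : Fin d → ℝ,
        Real.exp (-(gHJB (x + Real.sqrt (2 * (T - t)) • z)))
          = 2 / (1 + ∑ i, ((x + Real.sqrt (2 * (T - t)) • z) i) ^ 2)) ∧
      0 < ∫ z, Real.exp (-(gHJB (x + Real.sqrt (2 * (T - t)) • z))) ∂(stdGauss d)) ∧
    (∀ x : Fin d → ℝ, uHJB d T T x = gHJB x) ∧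
    (∀ t ∈ Set.Ico 0 T, ∀ x : Fin d → ℝ,
      partialT (uHJB d T) t x + ∑ i, spatialHess (uHJB d T) t x i i
        = ∑ i, (spatialGrad (uHJB d T) t x i) ^ 2) := by
  have hf := isBoundedC1_inverseQuadratic (isCoercive_dotProductCLM (d := d)) dotProductCLM_comm
  have hf' := isBoundedC1_fderiv_inverseQuadratic (isCoercive_dotProductCLM (d := d))
    dotProductCLM_comm
  have hpos := dilatedAverage_pos (μ := stdGauss d) hf
    (inverseQuadratic_pos isCoercive_dotProductCLM)
  refine ⟨fun t x => ?_, fun x => ?_, fun t ht x => ?_⟩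
  · simp only [exp_neg_gHJB]
    exact ⟨(hf.comp_add_smul _ x).integrable,
      fun z => by simp only [inverseQuadratic, dotProductCLM_apply, sq], hpos _ x⟩
  · simp [uHJB]
  · rw [uHJB_eq_neg_log_dilatedAverage]
    refine hjb_neg_log_of_heat (hpos _ x).ne'
      (.of_forall fun y => (hf.hasFDerivAt_dilatedAverage _ y).differentiableAt) ?_
      (hf.hasDerivAt_dilatedAverage_stdGauss_sqrt hf' ht.2 x)
    rw [hf.fderiv_dilatedAverage]
    exact (hf'.hasFDerivAt_dilatedAverage _ x).differentiableAt
end
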